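/- Let U ⊆ ℂ be an open set whose boundary ∂U is a Jordan curve (a homeomorphic image of the circle) and U the bounded component of its complement. Then there exists a homeomorphism g : ℂ → ℂ with g(U) equal to the open unit disc 𝔻 and g(ℂ \ closure(U)) = ℂ \ closure(𝔻). -/

import Mathlib

/-!
By the Riemann mapping theorem `U` is conformally equivalent to the disc, and the equivalence
extends to a homeomorphism of the closures (Carathéodory). The inversion `z ↦ z⁻¹` turns the
exterior of the curve into another Jordan domain, so the exterior together with the curve is
likewise homeomorphic to the complement of the open disc. On the curve the two maps differ by a
homeomorphism of the circle; its radial extension corrects the exterior map, and the two maps then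
glue.

The topology of the curve (simple connectivity of `U`, connectedness of its two sides, local
connectedness of `U` at its boundary) comes from continuous logarithms, following Borsuk and
Eilenberg: a compact set `K` does not separate `a` from `b` exactly when `(z - a) / (z - b)` has a
continuous logarithm on `K`. The Riemann map has boundary limits because two distinct cluster values
at one boundary point would, by local connectedness, force the inverse map to have a constant
radial cluster value over an arc of directions, which the length–area inequality rules out.
-/

open Set Filter Topology Metric Complex

namespace JordanSchoenflies

/-- The function `f` has a continuous logarithm on `s`. -/
def HasLogOn {X : Type*} [TopologicalSpace X] (f : X → ℂ) (s : Set X) : Prop :=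
  ∃ l : X → ℂ, ContinuousOn l s ∧ ∀ x ∈ s, exp (l x) = f x

section Logarithms

variable {X Y : Type*} [TopologicalSpace X] [TopologicalSpace Y] {f g : X → ℂ} {s t : Set X}

theorem HasLogOn.mono (h : HasLogOn f t) (hst : s ⊆ t) : HasLogOn f s := by
  obtain ⟨l, hl, he⟩ := h
  exact ⟨l, hl.mono hst, fun x hx ↦ he x (hst hx)⟩

theorem HasLogOn.congr (h : HasLogOn f s) (hfg : EqOn f g s) : HasLogOn g s := by
  obtain ⟨l, hl, he⟩ := h
  exact ⟨l, hl, fun x hx ↦ (he x hx).trans (hfg hx)⟩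

theorem HasLogOn.mul (hf : HasLogOn f s) (hg : HasLogOn g s) :
    HasLogOn (fun x ↦ f x * g x) s := by
  obtain ⟨l, hl, he⟩ := hf
  obtain ⟨l', hl', he'⟩ := hg
  exact ⟨fun x ↦ l x + l' x, hl.add hl', fun x hx ↦ by rw [exp_add, he x hx, he' x hx]⟩

theorem HasLogOn.inv (hf : HasLogOn f s) : HasLogOn (fun x ↦ (f x)⁻¹) s := by
  obtain ⟨l, hl, he⟩ := hf
  exact ⟨fun x ↦ -l x, hl.neg, fun x hx ↦ by rw [exp_neg, he x hx]⟩

theorem HasLogOn.zpow (hf : HasLogOn f s) (n : ℤ) : HasLogOn (fun x ↦ f x ^ n) s := by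
  obtain ⟨l, hl, he⟩ := hf
  exact ⟨fun x ↦ n * l x, continuousOn_const.mul hl, fun x hx ↦ by rw [exp_int_mul, he x hx]⟩

theorem hasLogOn_of_mapsTo_slitPlane (hf : ContinuousOn f s) (h : MapsTo f s slitPlane) :
    HasLogOn f s :=
  ⟨fun x ↦ log (f x), hf.clog h, fun _ hx ↦ exp_log (slitPlane_ne_zero (h hx))⟩

theorem eq_of_exp_eq_one_of_isPreconnected (hs : IsPreconnected s) (hf : ContinuousOn f s)
    (h1 : ∀ x ∈ s, exp (f x) = 1) {x y : X} (hx : x ∈ s) (hy : y ∈ s) : f x = f y := by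
  have hd : IsDiscrete (AddSubgroup.zmultiples (2 * Real.pi * I) : Set ℂ) :=
    ⟨NormedSpace.discreteTopology_zmultiples _⟩
  refine hs.constant_of_mapsTo hd hf (fun z hz ↦ ?_) hx hy
  obtain ⟨n, hn⟩ := exp_eq_one_iff.1 (h1 z hz)
  exact ⟨n, by simp [hn]⟩

theorem sub_eq_sub_of_exp_eq_exp (hs : IsPreconnected s) (hf : ContinuousOn f s)
    (hg : ContinuousOn g s) (h : ∀ x ∈ s, exp (f x) = exp (g x)) {x y : X} (hx : x ∈ s)
    (hy : y ∈ s) : f x - g x = f y - g y :=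
  eq_of_exp_eq_one_of_isPreconnected hs (hf.sub hg)
    (fun z hz ↦ by rw [Pi.sub_apply, exp_sub, h z hz, div_self (exp_ne_zero _)]) hx hy

theorem hasLogOn_of_convex {E : Type*} [NormedAddCommGroup E] [NormedSpace ℝ E] {s : Set E}
    {f : E → ℂ} (hs : Convex ℝ s) (hf : ContinuousOn f s) (h0 : ∀ x ∈ s, f x ≠ 0) :
    HasLogOn f s := by
  rcases s.eq_empty_or_nonempty with rfl | hne
  · exact ⟨0, continuousOn_empty _, fun x hx ↦ hx.elim⟩
  have := hs.contractibleSpace hne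
  have := hs.locallyPathConnectedSpace
  have hsc : IsSimplyConnected (univ : Set s) :=
    (Homeomorph.Set.univ s).toHomotopyEquiv.simplyConnectedSpace
  obtain ⟨l, hl, he⟩ := exists_continuousOn_eqOn_exp_comp hsc isOpen_univ
    (continuousOn_iff_continuous_domRestrict.1 hf).continuousOn
    fun ⟨x, _, hx⟩ ↦ h0 x x.2 hx
  have hext (x : s) : Function.extend Subtype.val l 0 x.1 = l x :=
    Subtype.val_injective.extend_apply l 0 x
  refine ⟨Function.extend Subtype.val l 0, ?_, fun x hx ↦ ?_⟩
  · rw [continuousOn_iff_continuous_domRestrict]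
    exact (continuousOn_univ.1 hl).congr fun x ↦ (hext x).symm
  · rw [hext ⟨x, hx⟩]
    exact he (mem_univ (⟨x, hx⟩ : s))

theorem HasLogOn.union (hs : HasLogOn f s) (ht : HasLogOn f t) (cs : IsClosed s) (ct : IsClosed t)
    (hst : IsPreconnected (s ∩ t)) : HasLogOn f (s ∪ t) := by
  classical
  obtain ⟨l, hl, he⟩ := hs
  obtain ⟨l', hl', he'⟩ := ht
  obtain ⟨k, hk, hkst⟩ : ∃ k : ℂ, exp k = 1 ∧ ∀ x ∈ s ∩ t, l x = l' x + k := by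
    rcases (s ∩ t).eq_empty_or_nonempty with h | ⟨p, hp⟩
    · exact ⟨0, exp_zero, by simp [h]⟩
    · have hexp : ∀ x ∈ s ∩ t, exp (l x) = exp (l' x) := fun x hx ↦ by
        rw [he x hx.1, he' x hx.2]
      refine ⟨l p - l' p, by rw [exp_sub, hexp p hp, div_self (exp_ne_zero _)], fun x hx ↦ ?_⟩
      rw [← sub_eq_sub_of_exp_eq_exp hst (hl.mono inter_subset_left) (hl'.mono inter_subset_right)
        hexp hx hp]
      ring
  have eqs : EqOn (s.piecewise l fun x ↦ l' x + k) l s := fun x hx ↦ piecewise_eq_of_mem _ _ _ hx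
  have eqt : EqOn (s.piecewise l fun x ↦ l' x + k) (fun x ↦ l' x + k) t := fun x hx ↦ by
    by_cases hxs : x ∈ s
    · rw [eqs hxs, hkst x ⟨hxs, hx⟩]
    · exact piecewise_eq_of_notMem _ _ _ hxs
  refine ⟨s.piecewise l fun x ↦ l' x + k,
    (hl.congr eqs).union_of_isClosed ((hl'.add continuousOn_const).congr eqt) cs ct, ?_⟩
  rintro x (hx | hx)
  · rw [eqs hx, he x hx]
  · rw [eqt hx, exp_add, hk, mul_one, he' x hx]

theorem continuousOn_image_of_comp [T2Space Y] {Z : Type*} [TopologicalSpace Z]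
    {γ : X → Y} {h : Y → Z} (hs : IsCompact s) (hγ : ContinuousOn γ s)
    (hc : ContinuousOn (h ∘ γ) s) : ContinuousOn h (γ '' s) := by
  rw [continuousOn_iff_isClosed]
  intro t ht
  obtain ⟨u, hu, hut⟩ := continuousOn_iff_isClosed.1 hc t ht
  refine ⟨γ '' (s ∩ u),
    ((hs.inter_right hu).image_of_continuousOn (hγ.mono inter_subset_left)).isClosed, ?_⟩
  rw [inter_eq_left.2 (image_mono inter_subset_left), inter_comm, ← image_inter_preimage,
    inter_comm s u, ← hut, inter_comm, preimage_comp]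

theorem hasLogOn_image_of_comp [T2Space Y] {γ : X → Y} {f : Y → ℂ} {l : X → ℂ}
    (hs : IsCompact s) (hγ : ContinuousOn γ s) (hl : ContinuousOn l s)
    (he : ∀ x ∈ s, exp (l x) = f (γ x)) (hfib : ∀ x ∈ s, ∀ y ∈ s, γ x = γ y → l x = l y) :
    HasLogOn f (γ '' s) := by
  rcases s.eq_empty_or_nonempty with rfl | hne
  · exact ⟨0, by simp, by simp⟩
  have : Nonempty X := hne.nonempty
  have heq : EqOn ((l ∘ Function.invFunOn γ s) ∘ γ) l s := fun x hx ↦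
    hfib _ (Function.invFunOn_apply_mem hx) _ hx (Function.invFunOn_apply_eq hx)
  refine ⟨l ∘ Function.invFunOn γ s, continuousOn_image_of_comp hs hγ (hl.congr heq), ?_⟩
  rintro _ ⟨x, hx, rfl⟩
  exact (congrArg exp (heq hx)).trans (he x hx)

theorem exists_continuous_extension_of_hasLogOn_frontier [NormalSpace X] {U : Set X} {R : X → ℂ}
    (hU : IsOpen U) (hf : ContinuousOn f Uᶜ) (hR : ContinuousOn R (closure U))
    (hR0 : ∀ x ∈ closure U, R x ≠ 0) (hlog : HasLogOn (fun x ↦ f x * R x) (frontier U)) :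
    ∃ F : X → ℂ, Continuous F ∧ EqOn F f Uᶜ ∧ ∀ x ∈ U, F x ≠ 0 := by
  classical
  obtain ⟨l, hl, he⟩ := hlog
  obtain ⟨L, hL⟩ := ContinuousMap.exists_restrict_eq isClosed_frontier
    ⟨(frontier U).domRestrict l, continuousOn_iff_continuous_domRestrict.1 hl⟩
  have hLl (x) (hx : x ∈ frontier U) : L x = l x := by
    simpa using DFunLike.congr_fun hL ⟨x, hx⟩
  refine ⟨U.piecewise (fun x ↦ exp (L x) / R x) f, ?_, fun x hx ↦ piecewise_eq_of_notMem _ _ _ hx,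
    fun x hx ↦ ?_⟩
  · refine continuous_piecewise (fun x hx ↦ ?_) (L.continuous.cexp.continuousOn.div hR hR0) ?_
    · rw [hLl x hx, he x hx, mul_div_cancel_right₀ _ (hR0 x (frontier_subset_closure hx))]
    · rwa [hU.isClosed_compl.closure_eq]
  · rw [piecewise_eq_of_mem _ _ _ hx]
    exact div_ne_zero (exp_ne_zero _) (hR0 x (subset_closure hx))

theorem exists_log_add_period {u : ℝ → ℂ} {T : ℝ} (hu : Continuous u) (h0 : ∀ t, u t ≠ 0)
    (hT : u.Periodic T) : ∃ (l : ℝ → ℂ) (m : ℤ), Continuous l ∧ (∀ t, exp (l t) = u t) ∧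
      ∀ t, l (t + T) = l t + m * (2 * Real.pi * I) := by
  obtain ⟨l, hl, he⟩ := hasLogOn_of_convex convex_univ hu.continuousOn fun t _ ↦ h0 t
  rw [continuousOn_univ] at hl
  replace he (t) : exp (l t) = u t := he t (mem_univ t)
  obtain ⟨m, hm⟩ := exp_eq_exp_iff_exists_int.1 ((he (0 + T)).trans ((hT 0).trans (he 0).symm))
  refine ⟨l, m, hl, he, fun t ↦ ?_⟩
  have := sub_eq_sub_of_exp_eq_exp (f := fun t ↦ l (t + T)) isPreconnected_univ
    (hl.comp (continuous_add_const T)).continuousOn hl.continuousOn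
    (fun t _ ↦ by rw [he, he, hT]) (mem_univ t) (mem_univ 0)
  linear_combination this + hm

end Logarithms

section Components

theorem frontier_connectedComponentIn_subset_compl {X : Type*} [TopologicalSpace X]
    [LocallyConnectedSpace X] {F : Set X} (hF : IsOpen F) (x : X) :
    frontier (connectedComponentIn F x) ⊆ Fᶜ := by
  intro z hz hzF
  rw [hF.connectedComponentIn.frontier_eq] at hz
  obtain ⟨w, hwz, hwx⟩ :=
    mem_closure_iff.1 hz.1 _ hF.connectedComponentIn (mem_connectedComponentIn hzF)
  apply hz.2
  rw [connectedComponentIn_eq hwx, ← connectedComponentIn_eq hwz]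
  exact mem_connectedComponentIn hzF

variable {E : Type*} [NormedAddCommGroup E] [NormedSpace ℝ E]

theorem isPreconnected_compl_closedBall (h : 1 < Module.rank ℝ E) (c : E) (r : ℝ) :
    IsPreconnected (closedBall c r)ᶜ := by
  rcases lt_or_ge r 0 with hr | hr
  · rw [closedBall_eq_empty.2 hr, compl_empty]
    exact isPreconnected_univ
  have himage : (closedBall c r)ᶜ =
      (fun p : ℝ × E ↦ c + (p.1 / ‖p.2‖) • p.2) '' (Ioi r ×ˢ {0}ᶜ) := by
    ext z
    simp only [mem_compl_iff, mem_closedBall, not_le, mem_image, Prod.exists, mem_prod, mem_Ioi,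
      mem_singleton_iff, dist_eq_norm]
    constructor
    · intro hz
      have hz0 : ‖z - c‖ ≠ 0 := (hr.trans_lt hz).ne'
      exact ⟨‖z - c‖, z - c, ⟨hz, norm_ne_zero_iff.1 hz0⟩, by rw [div_self hz0]; simp⟩
    · rintro ⟨t, x, ⟨ht, hx⟩, rfl⟩
      have hx0 : ‖x‖ ≠ 0 := norm_ne_zero_iff.2 hx
      rw [add_sub_cancel_left, norm_smul, norm_div, norm_norm, div_mul_cancel₀ _ hx0]
      exact ht.trans_le (le_abs_self t)
  rw [himage]
  refine (isPreconnected_Ioi.prod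
    (isConnected_compl_singleton_of_one_lt_rank h 0).isPreconnected).image _ ?_
  exact continuousOn_const.add ((continuousOn_fst.div continuousOn_snd.norm
    fun p hp ↦ norm_ne_zero_iff.2 hp.2).smul continuousOn_snd)

theorem connectedComponentIn_compl_eq_of_not_isBounded (h : 1 < Module.rank ℝ E) {K : Set E}
    (hK : Bornology.IsBounded K) {a b : E}
    (ha : ¬ Bornology.IsBounded (connectedComponentIn Kᶜ a))
    (hb : ¬ Bornology.IsBounded (connectedComponentIn Kᶜ b)) :
    connectedComponentIn Kᶜ a = connectedComponentIn Kᶜ b := by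
  obtain ⟨r, hr⟩ := hK.subset_closedBall 0
  have hsub {c : E} (hc : ¬ Bornology.IsBounded (connectedComponentIn Kᶜ c)) :
      ∃ z ∈ (closedBall 0 r)ᶜ, z ∈ connectedComponentIn Kᶜ c := by
    obtain ⟨z, hz, hzr⟩ := not_subset.1 fun hsub ↦ hc (isBounded_closedBall.subset hsub)
    exact ⟨z, hzr, hz⟩
  obtain ⟨z, hzr, hz⟩ := hsub ha
  obtain ⟨w, hwr, hw⟩ := hsub hb
  rw [connectedComponentIn_eq hz, connectedComponentIn_eq hw]
  exact connectedComponentIn_eq ((isPreconnected_compl_closedBall h 0 r).subset_connectedComponentIn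
    hzr (compl_subset_compl.2 hr) hwr)

end Components

section Janiszewski

variable {K K₁ K₂ : Set ℂ} {a b : ℂ}

theorem sub_ne_zero_of_notMem_of_mem (ha : a ∉ K) {z : ℂ} (hz : z ∈ K) : z - a ≠ 0 :=
  sub_ne_zero.2 fun h ↦ ha (h ▸ hz)

theorem continuousOn_sub_div_sub (hb : b ∉ K) :
    ContinuousOn (fun z ↦ (z - a) / (z - b)) K :=
  ContinuousOn.div (by fun_prop) (by fun_prop) fun _ ↦ sub_ne_zero_of_notMem_of_mem hb

theorem eq_zero_of_hasLogOn_sphere {r : ℝ} (hr : 0 < r) {n : ℤ}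
    (h : HasLogOn (fun z ↦ (z - a) ^ n) (sphere a r)) : n = 0 := by
  obtain ⟨l, hl, he⟩ := h
  have hmem (t : ℝ) : circleMap a r t ∈ sphere a r := circleMap_mem_sphere a hr.le t
  have hexp (t : ℝ) : exp (l (circleMap a r t)) = exp (n * (Real.log r + t * I)) := by
    rw [he _ (hmem t), exp_int_mul, exp_add, ← ofReal_exp, Real.exp_log hr]
    simp only [circleMap, add_sub_cancel_left]
  have := sub_eq_sub_of_exp_eq_exp isPreconnected_univ
    (hl.comp_continuous (continuous_circleMap a r) hmem).continuousOn
    (by fun_prop) (fun t _ ↦ hexp t) (mem_univ (2 * Real.pi)) (mem_univ 0)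
  simpa [(periodic_circleMap a r).eq, Real.pi_ne_zero] using this

theorem eq_zero_of_hasLogOn_frontier {C : Set ℂ} (hC : IsOpen C) (hCb : Bornology.IsBounded C)
    (ha : a ∈ C) {n : ℤ} {R : ℂ → ℂ} (hR : ContinuousOn R (closure C))
    (hR0 : ∀ z ∈ closure C, R z ≠ 0)
    (h : HasLogOn (fun z ↦ (z - a) ^ n * R z) (frontier C)) : n = 0 := by
  have hne {z : ℂ} (hz : z ∈ Cᶜ) : z - a ≠ 0 :=
    sub_ne_zero_of_notMem_of_mem (notMem_compl_iff.2 ha) hz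
  obtain ⟨F, hF, hFeq, hF0⟩ := exists_continuous_extension_of_hasLogOn_frontier hC
    (f := fun z ↦ (z - a) ^ n)
    (ContinuousOn.zpow₀ (by fun_prop) n fun z hz ↦ Or.inl (hne hz)) hR hR0 h
  obtain ⟨r, hr⟩ := hCb.subset_ball a
  have hsph : sphere a r ⊆ Cᶜ := fun z hz hzC ↦ (mem_ball.1 (hr hzC)).ne hz
  refine eq_zero_of_hasLogOn_sphere (a := a) (pos_of_mem_ball (hr ha)) ?_
  refine ((hasLogOn_of_convex convex_univ hF.continuousOn fun z _ ↦ ?_).mono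
    (subset_univ _)).congr (hFeq.mono hsph)
  by_cases hz : z ∈ C
  · exact hF0 z hz
  · rw [hFeq hz]
    exact zpow_ne_zero n (hne hz)

theorem hasLogOn_sub_div_sub_of_isPreconnected (hK : IsClosed K) {S : Set ℂ}
    (hS : IsPreconnected S) (hSK : S ⊆ Kᶜ) (ha : a ∈ S) (hb : b ∈ S) :
    HasLogOn (fun z ↦ (z - a) / (z - b)) K := by
  refine hS.induction₂ (fun a b ↦ HasLogOn (fun z ↦ (z - a) / (z - b)) K) (fun x hx ↦ ?_)
    (fun x y w _ hy _ hxy hyw ↦ (hxy.mul hyw).congr fun z hz ↦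
      div_mul_div_cancel₀ (sub_ne_zero_of_notMem_of_mem (hSK hy) hz))
    (fun x y _ _ h ↦ h.inv.congr fun z _ ↦ inv_div _ _) ha hb
  apply mem_nhdsWithin_of_mem_nhds
  obtain ⟨d, hd, hdK⟩ := Metric.isOpen_iff.1 hK.isOpen_compl x (hSK hx)
  filter_upwards [ball_mem_nhds x (half_pos hd)] with y hy
  have hyK : y ∉ K := hdK (ball_subset_ball (half_le_self hd.le) hy)
  refine hasLogOn_of_mapsTo_slitPlane (continuousOn_sub_div_sub hyK) fun z hz ↦ ?_
  have hne : z - y ≠ 0 := sub_ne_zero_of_notMem_of_mem hyK hz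
  have hlt : ‖y - x‖ < ‖z - y‖ := by
    have hxz : d ≤ dist z x := not_lt.1 fun h ↦ hdK h hz
    rw [mem_ball] at hy
    rw [← dist_eq, ← dist_eq]
    linarith [dist_triangle z y x]
  have : (z - x) / (z - y) = 1 + (y - x) / (z - y) := by field_simp; ring
  rw [this]
  apply mem_slitPlane_of_norm_lt_one
  rwa [norm_div, div_lt_one (norm_pos_iff.2 hne)]

theorem mem_connectedComponentIn_of_hasLogOn_of_isBounded (hK : IsClosed K) (ha : a ∉ K)
    (hb : b ∉ K) (h : HasLogOn (fun z ↦ (z - a) / (z - b)) K)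
    (hbd : Bornology.IsBounded (connectedComponentIn Kᶜ a)) :
    b ∈ connectedComponentIn Kᶜ a := by
  by_contra hbC
  have hfr : frontier (connectedComponentIn Kᶜ a) ⊆ K :=
    (frontier_connectedComponentIn_subset_compl hK.isOpen_compl a).trans (compl_compl K).subset
  have hbcl : b ∉ closure (connectedComponentIn Kᶜ a) := by
    rw [closure_eq_self_union_frontier]
    rintro (h | h)
    exacts [hbC h, hb (hfr h)]
  refine one_ne_zero (eq_zero_of_hasLogOn_frontier hK.isOpen_compl.connectedComponentIn hbd
    (mem_connectedComponentIn ha) (R := fun z ↦ (z - b)⁻¹) (n := 1)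
    (ContinuousOn.inv₀ (by fun_prop) fun z ↦ sub_ne_zero_of_notMem_of_mem hbcl)
    (fun z hz ↦ inv_ne_zero (sub_ne_zero_of_notMem_of_mem hbcl hz))
    ((h.mono hfr).congr fun z _ ↦ ?_))
  simp only [zpow_one, div_eq_mul_inv]

/-- **Borsuk's criterion**. -/
theorem mem_connectedComponentIn_of_hasLogOn (hK : IsCompact K) (ha : a ∉ K) (hb : b ∉ K)
    (h : HasLogOn (fun z ↦ (z - a) / (z - b)) K) : b ∈ connectedComponentIn Kᶜ a := by
  by_cases h1 : Bornology.IsBounded (connectedComponentIn Kᶜ a)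
  · exact mem_connectedComponentIn_of_hasLogOn_of_isBounded hK.isClosed ha hb h h1
  by_cases h2 : Bornology.IsBounded (connectedComponentIn Kᶜ b)
  · have := mem_connectedComponentIn_of_hasLogOn_of_isBounded hK.isClosed hb ha
      (h.inv.congr fun z _ ↦ inv_div _ _) h2
    rw [← connectedComponentIn_eq this]
    exact mem_connectedComponentIn hb
  · rw [connectedComponentIn_compl_eq_of_not_isBounded (by simp) hK.isBounded h1 h2]
    exact mem_connectedComponentIn hb

theorem janiszewski (h₁ : IsCompact K₁) (h₂ : IsCompact K₂) (hc : IsPreconnected (K₁ ∩ K₂))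
    (hb₁ : b ∈ connectedComponentIn K₁ᶜ a) (hb₂ : b ∈ connectedComponentIn K₂ᶜ a) :
    b ∈ connectedComponentIn (K₁ ∪ K₂)ᶜ a := by
  have hlog {K : Set ℂ} (hK : IsCompact K) (hb : b ∈ connectedComponentIn Kᶜ a) :
      HasLogOn (fun z ↦ (z - a) / (z - b)) K :=
    hasLogOn_sub_div_sub_of_isPreconnected hK.isClosed isPreconnected_connectedComponentIn
      (connectedComponentIn_subset _ _)
      (mem_connectedComponentIn (connectedComponentIn_nonempty_iff.1 ⟨b, hb⟩)) hb
  refine mem_connectedComponentIn_of_hasLogOn (h₁.union h₂) ?_ ?_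
    ((hlog h₁ hb₁).union (hlog h₂ hb₂) h₁.isClosed h₂.isClosed hc)
  · rw [mem_union, not_or]
    exact ⟨connectedComponentIn_nonempty_iff.1 ⟨b, hb₁⟩,
      connectedComponentIn_nonempty_iff.1 ⟨b, hb₂⟩⟩
  · rw [mem_union, not_or]
    exact ⟨connectedComponentIn_subset _ _ hb₁, connectedComponentIn_subset _ _ hb₂⟩

end Janiszewski

/-- A `2π`-periodic parametrization of a Jordan curve, which is then `range γ`. Arcs are images of
intervals of length less than `2π`. -/
structure IsJordanParam (γ : ℝ → ℂ) : Prop where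
  continuous : Continuous γ
  periodic : γ.Periodic (2 * Real.pi)
  exists_int_of_eq : ∀ ⦃s t : ℝ⦄, γ s = γ t → ∃ n : ℤ, s = t + n * (2 * Real.pi)

theorem isJordanParam_circleMap (c : ℂ) {r : ℝ} (hr : r ≠ 0) : IsJordanParam (circleMap c r) where
  continuous := continuous_circleMap c r
  periodic := periodic_circleMap c r
  exists_int_of_eq s t h := by
    obtain ⟨n, hn⟩ := (circleMap_eq_circleMap_iff c hr).1 h
    refine ⟨n, ?_⟩
    have : (s : ℂ) * I = ((t + n * (2 * Real.pi) : ℝ) : ℂ) * I := by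
      rw [hn]; push_cast; ring
    exact ofReal_injective (mul_right_cancel₀ I_ne_zero this)

namespace IsJordanParam

variable {γ : ℝ → ℂ}

theorem image_Icc (hγ : IsJordanParam γ) (a : ℝ) : γ '' Icc a (a + 2 * Real.pi) = range γ :=
  hγ.periodic.image_Icc Real.two_pi_pos a

theorem isCompact_range (hγ : IsJordanParam γ) : IsCompact (range γ) := by
  rw [← hγ.image_Icc 0]
  exact isCompact_Icc.image hγ.continuous

theorem hasLogOn_range_of_periodic (hγ : IsJordanParam γ) {f : ℂ → ℂ} {l : ℝ → ℂ}
    (hl : Continuous l) (he : ∀ t, exp (l t) = f (γ t)) (hper : l.Periodic (2 * Real.pi)) :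
    HasLogOn f (range γ) := by
  rw [← hγ.image_Icc 0]
  refine hasLogOn_image_of_comp isCompact_Icc hγ.continuous.continuousOn hl.continuousOn
    (fun t _ ↦ he t) fun s _ t _ hst ↦ ?_
  obtain ⟨n, rfl⟩ := hγ.exists_int_of_eq hst
  exact hper.int_mul n t

theorem exists_log_comp (hγ : IsJordanParam γ) {f : ℂ → ℂ} (hf : ContinuousOn f (range γ))
    (h0 : ∀ z ∈ range γ, f z ≠ 0) : ∃ (l : ℝ → ℂ) (m : ℤ), Continuous l ∧
      (∀ t, exp (l t) = f (γ t)) ∧ ∀ t, l (t + 2 * Real.pi) = l t + m * (2 * Real.pi * I) :=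
  exists_log_add_period (hf.comp_continuous hγ.continuous mem_range_self)
    (fun t ↦ h0 _ (mem_range_self t)) fun t ↦ congrArg f (hγ.periodic t)

end IsJordanParam

section Eilenberg

theorem hasLogOn_sub_of_isPreconnected_compl {K : Set ℂ} (hK : IsCompact K)
    (hKc : IsPreconnected Kᶜ) {a : ℂ} (ha : a ∉ K) : HasLogOn (fun z ↦ z - a) K := by
  obtain ⟨r, hr⟩ := hK.isBounded.subset_ball 0
  have hre {z : ℂ} (hz : z ∈ K) : 0 < (z - (-r : ℝ)).re := by
    have := (neg_abs_le z.re).trans' (neg_le_neg (abs_re_le_norm z))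
    have := mem_ball_zero_iff.1 (hr hz)
    simp only [sub_re, ofReal_re]
    linarith
  have hrK : ((-r : ℝ) : ℂ) ∉ K := fun h ↦ by simpa using hre h
  have h1 := hasLogOn_sub_div_sub_of_isPreconnected hK.isClosed hKc subset_rfl ha hrK
  have h2 : HasLogOn (fun z ↦ z - (-r : ℝ)) K :=
    hasLogOn_of_mapsTo_slitPlane (by fun_prop) fun z hz ↦ Or.inl (hre hz)
  exact (h1.mul h2).congr fun z hz ↦ div_mul_cancel₀ _ (sub_ne_zero_of_notMem_of_mem hrK hz)

theorem exists_hasLogOn_sphere_zpow_mul {a : ℂ} {r : ℝ} (hr : 0 < r) {f : ℂ → ℂ}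
    (hf : ContinuousOn f (sphere a r)) (h0 : ∀ z ∈ sphere a r, f z ≠ 0) :
    ∃ n : ℤ, HasLogOn (fun z ↦ (z - a) ^ n * f z) (sphere a r) := by
  have hγ := isJordanParam_circleMap a hr.ne'
  have hrange : range (circleMap a r) = sphere a r := by rw [range_circleMap, abs_of_pos hr]
  rw [← hrange] at hf h0 ⊢
  obtain ⟨l, m, hl, he, hm⟩ := hγ.exists_log_comp hf h0
  refine ⟨-m, hγ.hasLogOn_range_of_periodic
    (l := fun t ↦ (-m : ℤ) * (Real.log r + t * I) + l t) (by fun_prop) (fun t ↦ ?_) fun t ↦ ?_⟩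
  · rw [exp_add, exp_int_mul, exp_add, ← ofReal_exp, Real.exp_log hr, he]
    simp only [circleMap, add_sub_cancel_left]
  · simp only [hm]
    push_cast
    ring

theorem exists_finite_preimage_of_contDiff {E : Type*} [NormedAddCommGroup E] [NormedSpace ℝ E]
    [FiniteDimensional ℝ E] {G : E → E} (hG : ContDiff ℝ 1 G) {B : Set E} (hB : IsCompact B)
    {ε : ℝ} (hε : 0 < ε) : ∃ w, ‖w‖ < ε ∧ (B ∩ G ⁻¹' {w}).Finite := by
  borelize E
  have hd (x) : HasFDerivAt G (fderiv ℝ G x) x := (hG.differentiable one_ne_zero x).hasFDerivAt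
  have hcrit := MeasureTheory.addHaar_image_eq_zero_of_det_fderivWithin_eq_zero
    MeasureTheory.Measure.addHaar (s := {x | (fderiv ℝ G x).det = 0})
    (fun x _ ↦ (hd x).hasFDerivWithinAt) fun _ hx ↦ hx
  obtain ⟨w, hw, hwc⟩ := not_subset.1 fun hsub ↦
    (measure_ball_pos MeasureTheory.Measure.addHaar (0 : E) hε).ne'
      (MeasureTheory.measure_mono_null hsub hcrit)
  refine ⟨w, mem_ball_zero_iff.1 hw, ?_⟩
  by_contra hinf
  obtain ⟨x, hx, hacc⟩ := Infinite.exists_accPt_of_subset_isCompact hinf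
    (hB.inter_right (isClosed_singleton.preimage hG.continuous)) subset_rfl
  have hdet : (fderiv ℝ G x).det ≠ 0 := fun h ↦ hwc ⟨x, h, hx.2⟩
  have hne : ∀ᶠ z in 𝓝[≠] x, G z ≠ w := (hd x).eventually_ne
    ⟨_, ((fderiv ℝ G x).toContinuousLinearEquivOfDetNeZero hdet).antilipschitz⟩
  exact accPt_iff_frequently_nhdsNE.1 hacc (hne.mono fun z hz h ↦ hz h.2)

theorem exists_continuous_zpow_mul_ne_zero {G : ℂ → ℂ} (hG : Continuous G) {a : ℂ} {r : ℝ}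
    (hr : 0 < r) (h0 : ∀ z ∈ sphere a r, G z ≠ 0) :
    ∃ (n : ℤ) (F : ℂ → ℂ), Continuous F ∧ EqOn F (fun z ↦ (z - a) ^ n * G z) (ball a r)ᶜ ∧
      ∀ z ∈ ball a r, F z ≠ 0 := by
  obtain ⟨n, hn⟩ := exists_hasLogOn_sphere_zpow_mul hr hG.continuousOn h0
  refine ⟨n, exists_continuous_extension_of_hasLogOn_frontier (R := fun _ ↦ 1) isOpen_ball ?_
    continuousOn_const (fun _ _ ↦ one_ne_zero) ?_⟩
  · refine (ContinuousOn.zpow₀ (by fun_prop) n fun z hz ↦ Or.inl ?_).mul hG.continuousOn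
    exact sub_ne_zero_of_notMem_of_mem (notMem_compl_iff.2 (mem_ball_self hr)) hz
  · rw [frontier_ball a hr.ne']
    simpa only [mul_one] using hn

theorem hasLogOn_of_zeros_subset_finset {K B : Set ℂ} (hK : IsCompact K)
    (hKc : IsPreconnected Kᶜ) (hBo : IsOpen B) (hB : Convex ℝ B) (hKB : K ⊆ B) (Z : Finset ℂ)
    {G : ℂ → ℂ} (hG : Continuous G) (hZB : ∀ a ∈ Z, a ∈ B) (hZK : ∀ a ∈ Z, a ∉ K)
    (hGZ : ∀ z ∈ B, G z = 0 → z ∈ Z) : HasLogOn G K := by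
  induction Z using Finset.induction_on generalizing G with
  | empty =>
    exact (hasLogOn_of_convex hB hG.continuousOn fun z hz h ↦ by simpa using hGZ z hz h).mono hKB
  | insert a Z haZ ih =>
    simp only [Finset.forall_mem_insert] at hZB hZK
    have hnhds : B ∩ (K ∪ Z)ᶜ ∈ 𝓝 a :=
      (hBo.inter (hK.isClosed.union Z.finite_toSet.isClosed).isOpen_compl).mem_nhds
        ⟨hZB.1, fun h ↦ h.elim hZK.1 haZ⟩
    obtain ⟨r, hr, hsub⟩ := nhds_basis_closedBall.mem_iff.1 hnhds
    obtain ⟨n, F, hF, hFG, hF0⟩ := exists_continuous_zpow_mul_ne_zero hG hr fun z hz hz0 ↦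
      (Finset.mem_insert.1 (hGZ z (hsub (sphere_subset_closedBall hz)).1 hz0)).elim
        (fun h ↦ ne_of_mem_sphere hz hr.ne' h)
        fun h ↦ (hsub (sphere_subset_closedBall hz)).2 (Or.inr h)
    have hKball : K ⊆ (ball a r)ᶜ := fun z hz h ↦ (hsub (ball_subset_closedBall h)).2 (Or.inl hz)
    have hlogF : HasLogOn F K := ih hF hZB.2 hZK.2 fun z hz hz0 ↦ by
      by_cases hzb : z ∈ ball a r
      · exact (hF0 z hzb hz0).elim
      have hza : z ≠ a := fun h ↦ hzb (h ▸ mem_ball_self hr)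
      rw [hFG hzb, mul_eq_zero, or_iff_right (zpow_ne_zero n (sub_ne_zero.2 hza))] at hz0
      exact (Finset.mem_insert.1 (hGZ z hz hz0)).resolve_left hza
    refine (((hasLogOn_sub_of_isPreconnected_compl hK hKc hZK.1).zpow (-n)).mul hlogF).congr
      fun z hz ↦ ?_
    have := zpow_ne_zero n (sub_ne_zero_of_notMem_of_mem hZK.1 hz)
    simp only [hFG (hKball hz), zpow_neg]
    field_simp

theorem hasLogOn_of_norm_sub_lt {X : Type*} [TopologicalSpace X] {f g : X → ℂ} {s : Set X}
    (hf : ContinuousOn f s) (hg : ContinuousOn g s) (h : ∀ x ∈ s, ‖g x - f x‖ < ‖f x‖)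
    (hlog : HasLogOn g s) : HasLogOn f s := by
  have hf0 : ∀ x ∈ s, f x ≠ 0 := fun x hx hx0 ↦ (norm_nonneg _).not_gt (by simpa [hx0] using h x hx)
  have hdiv : HasLogOn (fun x ↦ g x / f x) s :=
    hasLogOn_of_mapsTo_slitPlane (hg.div hf hf0) fun x hx ↦ by
      have hne := hf0 x hx
      have : g x / f x = 1 + (g x - f x) / f x := by field_simp; ring
      rw [this]
      apply mem_slitPlane_of_norm_lt_one
      rw [norm_div, div_lt_one (norm_pos_iff.2 hne)]
      exact h x hx
  refine (hlog.mul hdiv.inv).congr fun x hx ↦ ?_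
  obtain ⟨l, -, he⟩ := hlog
  have hg0 : g x ≠ 0 := he x hx ▸ exp_ne_zero _
  have := hf0 x hx
  field_simp

theorem exists_contDiff_norm_sub_lt {K : Set ℂ} (hK : IsCompact K) {f : ℂ → ℂ}
    (hf : ContinuousOn f K) {ε : ℝ} (hε : 0 < ε) :
    ∃ G : ℂ → ℂ, ContDiff ℝ 1 G ∧ ∀ z ∈ K, ‖G z - f z‖ < ε := by
  obtain ⟨F, hF⟩ := ContinuousMap.exists_restrict_eq hK.isClosed
    ⟨K.domRestrict f, continuousOn_iff_continuous_domRestrict.1 hf⟩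
  obtain ⟨G, hG, hGF⟩ := (mem_closure_iff_nhds_basis (nhds_basis_uniformity
    uniformity_basis_dist.compactConvergenceUniformity)).1
    (ContinuousMap.dense_setOfPred_contDiff F) (K, ε) ⟨hK, hε⟩
  refine ⟨G, mod_cast contDiff_infty.1 hG 1, fun z hz ↦ ?_⟩
  have hFf : F z = f z := DFunLike.congr_fun hF ⟨z, hz⟩
  rw [← hFf, ← dist_eq]
  exact hGF z hz

/-- **Eilenberg's theorem**. -/
theorem hasLogOn_of_isPreconnected_compl {K : Set ℂ} (hK : IsCompact K) (hKc : IsPreconnected Kᶜ)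
    {f : ℂ → ℂ} (hf : ContinuousOn f K) (h0 : ∀ z ∈ K, f z ≠ 0) : HasLogOn f K := by
  obtain ⟨ε, hε, hfε⟩ : ∃ ε > 0, ∀ z ∈ K, ε ≤ ‖f z‖ := by
    rcases K.eq_empty_or_nonempty with rfl | hne
    · exact ⟨1, one_pos, by simp⟩
    obtain ⟨z₀, hz₀, hmin⟩ := hK.exists_isMinOn hne hf.norm
    exact ⟨‖f z₀‖, norm_pos_iff.2 (h0 z₀ hz₀), hmin⟩
  obtain ⟨G, hG, hGf⟩ := exists_contDiff_norm_sub_lt hK hf (half_pos hε)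
  obtain ⟨r, hr⟩ := hK.isBounded.subset_ball 0
  obtain ⟨w, hw, hfin⟩ :=
    exists_finite_preimage_of_contDiff hG (isCompact_closedBall (0 : ℂ) r) (half_pos hε)
  have hlt (z) (hz : z ∈ K) : ‖G z - w - f z‖ < ‖f z‖ := calc
    ‖G z - w - f z‖ = ‖(G z - f z) - w‖ := by rw [sub_right_comm]
    _ ≤ ‖G z - f z‖ + ‖w‖ := norm_sub_le _ _
    _ < ε / 2 + ε / 2 := add_lt_add (hGf z hz) hw
    _ ≤ ‖f z‖ := (add_halves ε).trans_le (hfε z hz)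
  have hGw : Continuous fun z ↦ G z - w := hG.continuous.sub continuous_const
  refine hasLogOn_of_norm_sub_lt hf hGw.continuousOn hlt ?_
  have hfin' : (ball 0 r ∩ G ⁻¹' {w}).Finite :=
    hfin.subset (inter_subset_inter_left _ ball_subset_closedBall)
  refine hasLogOn_of_zeros_subset_finset hK hKc isOpen_ball (convex_ball 0 r) hr hfin'.toFinset hGw
    (fun a ha ↦ ((Finite.mem_toFinset _).1 ha).1) (fun a ha haK ↦ ?_) fun z hz hz0 ↦
      (Finite.mem_toFinset _).2 ⟨hz, sub_eq_zero.1 hz0⟩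
  have haw : G a = w := ((Finite.mem_toFinset _).1 ha).2
  exact absurd (hlt a haK) (by simp [haw])

end Eilenberg

section JordanCurve

theorem subset_of_disjoint_frontier {X : Type*} [TopologicalSpace X] {s t : Set X}
    (hs : IsPreconnected s) (hst : (s ∩ t).Nonempty) (hd : Disjoint s (frontier t)) : s ⊆ t := by
  have hcover : s ⊆ interior t ∪ (closure t)ᶜ := fun x hx ↦ by
    by_contra h
    simp only [mem_union, mem_compl_iff, not_or, not_not] at h
    exact disjoint_left.1 hd hx ⟨h.2, h.1⟩
  have hin : (s ∩ interior t).Nonempty := by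
    obtain ⟨x, hx, hxt⟩ := hst
    exact ⟨x, hx, (hcover hx).resolve_right fun h ↦ h (subset_closure hxt)⟩
  exact (hs.subset_left_of_subset_union isOpen_interior isClosed_closure.isOpen_compl
    (disjoint_left.2 fun x hx h ↦ h (interior_subset_closure hx)) hcover hin).trans
    interior_subset

theorem exists_isJordanParam {e : sphere (0 : ℂ) 1 → ℂ} (he : Continuous e)
    (hinj : Function.Injective e) : ∃ γ, IsJordanParam γ ∧ range γ = range e := by
  have hmem (t : ℝ) : circleMap 0 1 t ∈ sphere (0 : ℂ) 1 := circleMap_mem_sphere 0 zero_le_one t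
  have hc := isJordanParam_circleMap 0 one_ne_zero
  refine ⟨fun t ↦ e ⟨circleMap 0 1 t, hmem t⟩,
    ⟨he.comp (hc.continuous.subtype_mk hmem), fun t ↦ congrArg e (Subtype.ext (hc.periodic t)),
      fun s t h ↦ hc.exists_int_of_eq (congrArg Subtype.val (hinj h))⟩, ?_⟩
  have hsurj : Function.Surjective fun t ↦ (⟨circleMap 0 1 t, hmem t⟩ : sphere (0 : ℂ) 1) := by
    rintro ⟨w, hw⟩
    obtain ⟨t, rfl⟩ : w ∈ range (circleMap 0 1) := by rwa [range_circleMap, abs_one]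
    exact ⟨t, rfl⟩
  exact hsurj.range_comp e

namespace IsJordanParam

variable {γ : ℝ → ℂ}

theorem injOn_Icc (hγ : IsJordanParam γ) {a b : ℝ} (hab : b < a + 2 * Real.pi) :
    InjOn γ (Icc a b) := by
  intro s hs t ht hst
  obtain ⟨n, rfl⟩ := hγ.exists_int_of_eq hst
  have h1 : (n : ℝ) < 1 := by nlinarith [hs.2, ht.1, Real.pi_pos]
  have h2 : (-1 : ℝ) < n := by nlinarith [hs.1, ht.2, Real.pi_pos]
  obtain rfl : n = 0 := by
    have : n < 1 := mod_cast h1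
    have : -1 < n := mod_cast h2
    omega
  simp

theorem apply_ne (hγ : IsJordanParam γ) {s t : ℝ} (hst : s < t) (hts : t < s + 2 * Real.pi) :
    γ s ≠ γ t := fun h ↦
  hst.ne (hγ.injOn_Icc hts (left_mem_Icc.2 hst.le) (right_mem_Icc.2 hst.le) h)

theorem exists_mem_Ico (hγ : IsJordanParam γ) {z : ℂ} (hz : z ∈ range γ) (a : ℝ) :
    ∃ t ∈ Ico a (a + 2 * Real.pi), γ t = z := by
  obtain ⟨s, rfl⟩ := hz
  obtain ⟨t, ht, h⟩ := hγ.periodic.exists_mem_Ico Real.two_pi_pos s a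
  exact ⟨t, ht, h.symm⟩

theorem hasLogOn_image_Icc (hγ : IsJordanParam γ) {a b : ℝ} (hab : b < a + 2 * Real.pi)
    {f : ℂ → ℂ} (hf : ContinuousOn f (γ '' Icc a b)) (h0 : ∀ z ∈ γ '' Icc a b, f z ≠ 0) :
    HasLogOn f (γ '' Icc a b) := by
  obtain ⟨l, hl, he⟩ := hasLogOn_of_convex (convex_Icc a b)
    (hf.comp hγ.continuous.continuousOn (mapsTo_image γ _))
    fun t ht ↦ h0 _ (mem_image_of_mem γ ht)
  exact hasLogOn_image_of_comp isCompact_Icc hγ.continuous.continuousOn hl he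
    fun s hs t ht hst ↦ by rw [hγ.injOn_Icc hab hs ht hst]

theorem isPreconnected_compl_image_Icc (hγ : IsJordanParam γ) {a b : ℝ}
    (hab : b < a + 2 * Real.pi) : IsPreconnected (γ '' Icc a b)ᶜ := by
  refine isPreconnected_of_forall_pair fun p hp q hq ↦ ⟨_, connectedComponentIn_subset _ p,
    mem_connectedComponentIn hp, ?_, isPreconnected_connectedComponentIn⟩
  exact mem_connectedComponentIn_of_hasLogOn (isCompact_Icc.image hγ.continuous) hp hq <|
    hγ.hasLogOn_image_Icc hab (continuousOn_sub_div_sub hq) fun z hz ↦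
      div_ne_zero (sub_ne_zero_of_notMem_of_mem hp hz) (sub_ne_zero_of_notMem_of_mem hq hz)

theorem exists_arc_of_mem (hγ : IsJordanParam γ) {x : ℂ} (hx : x ∈ range γ) {ε : ℝ} (hε : 0 < ε) :
    ∃ A ⊆ range γ, IsCompact A ∧ IsPreconnected A ∧ IsPreconnected Aᶜ ∧ x ∉ A ∧
      range γ \ ball x ε ⊆ A := by
  obtain ⟨s, rfl⟩ := hx
  obtain ⟨d, hd, hdε⟩ := Metric.continuous_iff.1 hγ.continuous s ε hε
  obtain ⟨η, hη, hηd⟩ : ∃ η, 0 < η ∧ η < d := exists_between hd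
  refine ⟨γ '' Icc (s + η) (s + 2 * Real.pi - η), image_subset_range _ _,
    isCompact_Icc.image hγ.continuous, isPreconnected_Icc.image _ hγ.continuous.continuousOn,
    hγ.isPreconnected_compl_image_Icc (by linarith), ?_, ?_⟩
  · rintro ⟨t, ht, hst⟩
    exact hγ.apply_ne (by linarith [ht.1]) (by linarith [ht.2]) hst.symm
  · rintro z ⟨hz, hzε⟩
    obtain ⟨t, ht, rfl⟩ := hγ.exists_mem_Ico hz s
    have hmem {u : ℝ} (hu : γ u = γ t) : η < |u - s| := by
      by_contra! h
      exact hzε (mem_ball.2 (hu ▸ hdε u (h.trans_lt hηd)))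
    have h1 := hmem rfl
    have h2 := hmem (hγ.periodic.sub_eq t)
    rw [abs_of_nonneg (by linarith [ht.1])] at h1
    rw [abs_of_neg (by linarith [ht.2])] at h2
    exact ⟨t, ⟨by linarith, by linarith⟩, rfl⟩

end IsJordanParam

/-- `U` is a bounded domain whose boundary is the Jordan curve parametrized by `γ`. -/
structure IsJordanDomain (γ : ℝ → ℂ) (U : Set ℂ) : Prop where
  isJordanParam : IsJordanParam γ
  isOpen : IsOpen U
  isConnected : IsConnected U
  isBounded : Bornology.IsBounded U
  frontier_eq : frontier U = range γ

namespace IsJordanDomain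

variable {γ : ℝ → ℂ} {U : Set ℂ}

theorem range_subset_closure (h : IsJordanDomain γ U) : range γ ⊆ closure U :=
  h.frontier_eq ▸ frontier_subset_closure

theorem disjoint_range (h : IsJordanDomain γ U) : Disjoint U (range γ) := by
  rw [← h.frontier_eq]
  exact (disjoint_frontier_iff_isOpen.2 h.isOpen).symm

theorem closure_eq (h : IsJordanDomain γ U) : closure U = U ∪ range γ := by
  rw [closure_eq_self_union_frontier, h.frontier_eq]

theorem notMem_range_of_notMem_closure (h : IsJordanDomain γ U) {z : ℂ} (hz : z ∉ closure U) :
    z ∉ range γ :=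
  fun hzγ ↦ hz (h.range_subset_closure hzγ)

theorem mem_connectedComponentIn_of_notMem_closure (h : IsJordanDomain γ U) {b c : ℂ}
    (hb : b ∉ closure U) (hc : c ∉ closure U) : c ∈ connectedComponentIn (range γ)ᶜ b := by
  have hγ := h.isJordanParam
  have hbγ := h.notMem_range_of_notMem_closure hb
  have hcγ := h.notMem_range_of_notMem_closure hc
  obtain ⟨a, ha⟩ := h.isConnected.nonempty
  have haγ := disjoint_left.1 h.disjoint_range ha
  have hlift {x : ℂ} (hx : x ∉ range γ) := hγ.exists_log_comp
    (continuousOn_sub_div_sub (a := x) hcγ) fun z hz ↦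
      div_ne_zero (sub_ne_zero_of_notMem_of_mem hx hz) (sub_ne_zero_of_notMem_of_mem hcγ hz)
  obtain ⟨l₁, m, hl₁, he₁, hm⟩ := hlift haγ
  obtain ⟨l₂, n, hl₂, he₂, hn⟩ := hlift hbγ
  -- If `n ≠ 0`, a suitable product of powers of the two quotients has winding number `0` on the
  -- curve but a zero or a pole at `a`.
  have hlog : HasLogOn (fun z ↦ ((z - a) / (z - c)) ^ n * ((z - b) / (z - c)) ^ (-m))
      (range γ) := by
    refine hγ.hasLogOn_range_of_periodic (l := fun t ↦ n * l₁ t + (-m : ℤ) * l₂ t) (by fun_prop)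
      (fun t ↦ ?_) fun t ↦ ?_
    · rw [exp_add, exp_int_mul, exp_int_mul, he₁, he₂]
    · simp only [hm, hn]
      push_cast
      ring
  obtain rfl : n = 0 := by
    refine eq_zero_of_hasLogOn_frontier h.isOpen h.isBounded ha
      (R := fun z ↦ (z - b) ^ (-m) * (z - c) ^ (m - n)) ?_ (fun z hz ↦ ?_) ?_
    · exact (ContinuousOn.zpow₀ (by fun_prop) _ fun z hz ↦
        Or.inl (sub_ne_zero_of_notMem_of_mem hb hz)).mul (ContinuousOn.zpow₀ (by fun_prop) _
          fun z hz ↦ Or.inl (sub_ne_zero_of_notMem_of_mem hc hz))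
    · exact mul_ne_zero (zpow_ne_zero _ (sub_ne_zero_of_notMem_of_mem hb hz))
        (zpow_ne_zero _ (sub_ne_zero_of_notMem_of_mem hc hz))
    · rw [h.frontier_eq]
      refine hlog.congr fun z hz ↦ ?_
      have hz0 := sub_ne_zero_of_notMem_of_mem hcγ hz
      simp only [div_zpow, zpow_sub₀ hz0, zpow_neg]
      field_simp
  refine mem_connectedComponentIn_of_hasLogOn hγ.isCompact_range hbγ hcγ
    (hγ.hasLogOn_range_of_periodic hl₂ he₂ fun t ↦ ?_)
  simp [hn]

theorem isPreconnected_compl_closure (h : IsJordanDomain γ U) : IsPreconnected (closure U)ᶜ := by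
  refine isPreconnected_of_forall_pair fun b hb c hc ↦ ?_
  have hbγ := h.notMem_range_of_notMem_closure hb
  refine ⟨_, subset_of_disjoint_frontier isPreconnected_connectedComponentIn
    ⟨b, mem_connectedComponentIn hbγ, hb⟩ ?_, mem_connectedComponentIn hbγ,
    h.mem_connectedComponentIn_of_notMem_closure hb hc, isPreconnected_connectedComponentIn⟩
  refine (disjoint_compl_left (a := range γ)).mono (connectedComponentIn_subset _ _) ?_
  rw [frontier_compl, ← h.frontier_eq]
  exact frontier_closure_subset

theorem frontier_compl_closure (h : IsJordanDomain γ U) : frontier (closure U)ᶜ = range γ := by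
  have hsub : frontier (closure U)ᶜ ⊆ range γ := by
    rw [frontier_compl, ← h.frontier_eq]
    exact frontier_closure_subset
  refine hsub.antisymm fun x hx ↦ ?_
  by_contra hxV
  have hx' : x ∈ (frontier (closure U)ᶜ)ᶜ := hxV
  obtain ⟨ε, hε, hball⟩ := Metric.isOpen_iff.1 isClosed_frontier.isOpen_compl x hx'
  -- An arc containing the curve outside `ball x ε` would separate `U` from the outer region.
  obtain ⟨A, hAγ, -, -, hAc, -, hA⟩ := h.isJordanParam.exists_arc_of_mem hx hε
  obtain ⟨a, ha⟩ := h.isConnected.nonempty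
  have haA : a ∉ A := fun haA ↦ disjoint_left.1 h.disjoint_range ha (hAγ haA)
  obtain ⟨c, hc⟩ : (closure U)ᶜ.Nonempty :=
    nonempty_compl.2 fun hU ↦ NormedSpace.unbounded_univ ℝ ℂ (hU ▸ h.isBounded.closure)
  have hcA : c ∉ A := fun hcA ↦ h.notMem_range_of_notMem_closure hc (hAγ hcA)
  refine subset_of_disjoint_frontier hAc ⟨c, hcA, hc⟩ ?_ haA (subset_closure ha)
  refine disjoint_left.2 fun z hzA hz ↦ ?_
  exact hball (by_contra fun hzb ↦ hzA (hA ⟨hsub hz, hzb⟩)) hz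

theorem closure_compl_closure (h : IsJordanDomain γ U) : closure (closure U)ᶜ = Uᶜ := by
  rw [closure_eq_self_union_frontier, h.frontier_compl_closure, h.closure_eq, compl_union,
    inter_union_distrib_right, compl_union_self, inter_univ,
    union_eq_self_of_subset_right h.disjoint_range.subset_compl_left]

theorem isPreconnected_compl (h : IsJordanDomain γ U) : IsPreconnected Uᶜ :=
  h.closure_compl_closure ▸ h.isPreconnected_compl_closure.closure

theorem exists_mem_connectedComponentIn_inter_ball (h : IsJordanDomain γ U) {x : ℂ}
    (hx : x ∈ range γ) {ε : ℝ} (hε : 0 < ε) :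
    ∃ δ, 0 < δ ∧ δ ≤ ε ∧ ∀ a ∈ U ∩ ball x δ, ∀ b ∈ U ∩ ball x δ,
      b ∈ connectedComponentIn (U ∩ ball x ε) a := by
  obtain ⟨A, hAγ, hAc, hAp, -, hxA, hA⟩ := h.isJordanParam.exists_arc_of_mem hx hε
  obtain ⟨d, hd, hdA⟩ := Metric.isOpen_iff.1 hAc.isClosed.isOpen_compl x hxA
  obtain ⟨R, hR⟩ := h.isBounded.subset_closedBall x
  refine ⟨min d ε, lt_min hd hε, min_le_right _ _, fun a ⟨haU, ha⟩ b ⟨hbU, hb⟩ ↦ ?_⟩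
  set K := A ∪ closedBall x R \ ball x ε
  have hinter : range γ ∩ K = A := by
    refine Subset.antisymm ?_ (subset_inter hAγ subset_union_left)
    rintro z ⟨hz, hzA | hzR⟩
    exacts [hzA, hA ⟨hz, hzR.2⟩]
  have hb₁ : b ∈ connectedComponentIn (range γ)ᶜ a :=
    h.isConnected.isPreconnected.subset_connectedComponentIn haU
      h.disjoint_range.subset_compl_right hbU
  have hb₂ : b ∈ connectedComponentIn Kᶜ a := by
    refine (convex_ball x (min d ε)).isPreconnected.subset_connectedComponentIn ha ?_ hb
    rintro z hz (hzA | hzR)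
    · exact hdA (ball_subset_ball (min_le_left _ _) hz) hzA
    · exact hzR.2 (ball_subset_ball (min_le_right _ _) hz)
  have hbK := janiszewski h.isJordanParam.isCompact_range
    (hAc.union ((isCompact_closedBall x R).diff isOpen_ball)) (by rwa [hinter]) hb₁ hb₂
  have haK : a ∈ connectedComponentIn (range γ ∪ K)ᶜ a :=
    mem_connectedComponentIn (connectedComponentIn_nonempty_iff.1 ⟨b, hbK⟩)
  have hS := connectedComponentIn_subset (range γ ∪ K)ᶜ a
  have hSU : connectedComponentIn (range γ ∪ K)ᶜ a ⊆ U :=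
    subset_of_disjoint_frontier isPreconnected_connectedComponentIn ⟨a, haK, haU⟩ <|
      disjoint_left.2 fun z hz hzf ↦ hS hz (Or.inl (h.frontier_eq ▸ hzf))
  have hSx : connectedComponentIn (range γ ∪ K)ᶜ a ⊆ U ∩ ball x ε := fun z hz ↦
    ⟨hSU hz, by_contra fun hzε ↦ hS hz (Or.inr (Or.inr ⟨hR (hSU hz), hzε⟩))⟩
  exact isPreconnected_connectedComponentIn.subset_connectedComponentIn haK hSx hbK

end IsJordanDomain

end JordanCurve

section LogarithmDomains

theorem hasLogOn_iUnion_of_directed {X ι : Type*} [TopologicalSpace X] {V : ι → Set X}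
    {f : X → ℂ} {p : X} (hV : Directed (· ⊆ ·) V) (ho : ∀ i, IsOpen (V i))
    (hc : ∀ i, IsPreconnected (V i)) (hp : ∀ i, p ∈ V i) (h : ∀ i, HasLogOn f (V i)) :
    HasLogOn f (⋃ i, V i) := by
  choose l hl he using h
  have hagree {i j : ι} {x : X} (hi : x ∈ V i) (hj : x ∈ V j) :
      l i x - l i p = l j x - l j p := by
    obtain ⟨k, hik, hjk⟩ := hV i j
    have hle {i : ι} (hik : V i ⊆ V k) (hi : x ∈ V i) : l i x - l k x = l i p - l k p :=
      sub_eq_sub_of_exp_eq_exp (hc i) (hl i) ((hl k).mono hik)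
        (fun y hy ↦ by rw [he i y hy, he k y (hik hy)]) hi (hp i)
    linear_combination hle hik hi - hle hjk hj
  rcases isEmpty_or_nonempty ι with hι | hι
  · simpa using ⟨0, continuousOn_empty _, by simp⟩
  choose! i hi using fun (x : X) (hx : x ∈ ⋃ i, V i) ↦ mem_iUnion.1 hx
  have hfp : f p ≠ 0 := he hι.some p (hp _) ▸ exp_ne_zero _
  refine ⟨fun x ↦ l (i x) x - l (i x) p + log (f p), fun x hx ↦ ?_, fun x hx ↦ ?_⟩
  · have hlx := (hl (i x)).continuousAt ((ho _).mem_nhds (hi x hx))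
    refine (((hlx.sub continuousAt_const).add continuousAt_const).congr
      (f := fun y ↦ l (i x) y - l (i x) p + log (f p)) ?_).continuousWithinAt
    filter_upwards [(ho _).mem_nhds (hi x hx)] with y hy
    rw [hagree hy (hi y (mem_iUnion_of_mem _ hy))]
  · rw [exp_add, exp_sub, he _ x (hi x hx), he _ p (hp _), exp_log hfp, div_mul_cancel₀ _ hfp]

theorem exists_mem_connectedComponentIn_lt_infDist {E : Type*} [NormedAddCommGroup E]
    [NormedSpace ℝ E] {U : Set E} (hU : IsOpen U) (hc : IsConnected U) (hne : Uᶜ.Nonempty)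
    {p z : E} (hp : p ∈ U) (hz : z ∈ U) :
    ∃ δ > 0, z ∈ connectedComponentIn {w | δ < infDist w Uᶜ} p := by
  obtain ⟨g, hg⟩ := (hU.isConnected_iff_isPathConnected.1 hc).joinedIn p hp z hz
  obtain ⟨_, ⟨t, rfl⟩, hmin⟩ := (isCompact_range g.continuous).exists_isMinOn (range_nonempty g)
    (continuous_infDist_pt Uᶜ).continuousOn
  have hpos : 0 < infDist (g t) Uᶜ :=
    (hU.isClosed_compl.notMem_iff_infDist_pos hne).1 (not_not.2 (hg t))
  obtain ⟨δ, hδ, hδt⟩ := exists_between hpos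
  exact ⟨δ, hδ, (isPreconnected_range g.continuous).subset_connectedComponentIn ⟨0, g.source⟩
    (fun w hw ↦ hδt.trans_le (hmin hw)) ⟨1, g.target⟩⟩

theorem isPreconnected_compl_le_infDist {E : Type*} [NormedAddCommGroup E] [NormedSpace ℝ E]
    {F : Set E} (hF : IsPreconnected F) (hne : F.Nonempty) {δ : ℝ} (hδ : 0 < δ) :
    IsPreconnected {z | δ ≤ infDist z F}ᶜ := by
  obtain ⟨x, hx⟩ := hne
  refine isPreconnected_of_forall x fun y hy ↦ ?_
  obtain ⟨w, hw, hyw⟩ := (infDist_lt_iff ⟨x, hx⟩).1 (not_le.1 hy)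
  refine ⟨F ∪ ball w δ, ?_, Or.inl hx, Or.inr hyw,
    hF.union w hw (mem_ball_self hδ) (convex_ball w δ).isPreconnected⟩
  rintro z (hz | hz) (hzδ : δ ≤ infDist z F)
  · exact (hδ.trans_le hzδ).ne' (infDist_zero_of_mem hz)
  · exact (hzδ.trans (infDist_le_dist_of_mem hw)).not_gt hz

theorem hasLogOn_of_isOpen_of_isPreconnected_compl {U : Set ℂ} (hU : IsOpen U)
    (hc : IsConnected U) (hb : Bornology.IsBounded U) (hcU : IsPreconnected Uᶜ) {f : ℂ → ℂ}
    (hf : ContinuousOn f U) (h0 : ∀ z ∈ U, f z ≠ 0) : HasLogOn f U := by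
  obtain ⟨p, hp⟩ := hc.nonempty
  have hne : Uᶜ.Nonempty :=
    nonempty_compl.2 fun h ↦ NormedSpace.unbounded_univ ℝ ℂ (h ▸ hb)
  have hKU {δ : ℝ} (hδ : 0 < δ) : {z | δ ≤ infDist z Uᶜ} ⊆ U := fun z hz ↦ by
    by_contra hzU
    exact (hδ.trans_le hz).ne' (infDist_zero_of_mem hzU)
  have hlog {δ : ℝ} (hδ : 0 < δ) : HasLogOn f {z | δ ≤ infDist z Uᶜ} :=
    hasLogOn_of_isPreconnected_compl
      (isCompact_of_isClosed_isBounded (isClosed_le continuous_const (continuous_infDist_pt _))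
        (hb.subset (hKU hδ)))
      (isPreconnected_compl_le_infDist hcU hne hδ) (hf.mono (hKU hδ))
      fun z hz ↦ h0 z (hKU hδ hz)
  let V : Ioo 0 (infDist p Uᶜ) → Set ℂ := fun δ ↦ connectedComponentIn {z | δ < infDist z Uᶜ} p
  have hVmono : Antitone V := fun δ ε hδε ↦ connectedComponentIn_mono p fun z hz ↦
    (Subtype.coe_le_coe.2 hδε).trans_lt hz
  have hVK (δ) : V δ ⊆ {z | δ ≤ infDist z Uᶜ} := (connectedComponentIn_subset _ _).trans
    (ofPred_subset_ofPred.2 fun z ↦ le_of_lt)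
  have hV : ⋃ δ, V δ = U := by
    refine Subset.antisymm (iUnion_subset fun δ ↦ (hVK δ).trans (hKU δ.2.1)) fun z hz ↦ ?_
    obtain ⟨δ, hδ, hzδ⟩ := exists_mem_connectedComponentIn_lt_infDist hU hc hne hp hz
    have hpδ : p ∈ {w | δ < infDist w Uᶜ} := connectedComponentIn_nonempty_iff.1 ⟨z, hzδ⟩
    exact mem_iUnion.2 ⟨⟨δ, hδ, hpδ⟩, hzδ⟩
  rw [← hV]
  refine hasLogOn_iUnion_of_directed hVmono.directed_le (fun δ ↦ ?_)
    (fun δ ↦ isPreconnected_connectedComponentIn) (fun δ ↦ mem_connectedComponentIn δ.2.2)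
    fun δ ↦ (hlog δ.2.1).mono (hVK δ)
  exact (isOpen_lt continuous_const (continuous_infDist_pt _)).connectedComponentIn

end LogarithmDomains

section RiemannMapping

/-- A conformal map on `U`: an injective holomorphic function. The nonvanishing of the derivative,
which follows from injectivity, is recorded as part of the definition. -/
structure IsConformalOn (f : ℂ → ℂ) (U : Set ℂ) : Prop where
  differentiableOn : DifferentiableOn ℂ f U
  injOn : InjOn f U
  deriv_ne_zero : ∀ z ∈ U, deriv f z ≠ 0

theorem IsConformalOn.hasDerivAt {f : ℂ → ℂ} {U : Set ℂ} {z : ℂ} (hf : IsConformalOn f U)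
    (hU : IsOpen U) (hz : z ∈ U) : HasDerivAt f (deriv f z) z :=
  (hf.differentiableOn.differentiableAt (hU.mem_nhds hz)).hasDerivAt

theorem isConformalOn_of_hasDerivAt {f f' : ℂ → ℂ} {U : Set ℂ}
    (hf : ∀ z ∈ U, HasDerivAt f (f' z) z) (hinj : InjOn f U) (hf' : ∀ z ∈ U, f' z ≠ 0) :
    IsConformalOn f U where
  differentiableOn z hz := (hf z hz).differentiableAt.differentiableWithinAt
  injOn := hinj
  deriv_ne_zero z hz := by rw [(hf z hz).deriv]; exact hf' z hz

theorem IsConformalOn.comp {f g : ℂ → ℂ} {U V : Set ℂ} (hg : IsConformalOn g V)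
    (hf : IsConformalOn f U) (hV : IsOpen V) (hU : IsOpen U) (hfUV : MapsTo f U V) :
    IsConformalOn (g ∘ f) U :=
  isConformalOn_of_hasDerivAt
    (fun z hz ↦ (hg.hasDerivAt hV (hfUV hz)).comp z (hf.hasDerivAt hU hz))
    (hg.injOn.comp hf.injOn hfUV)
    fun z hz ↦ mul_ne_zero (hg.deriv_ne_zero _ (hfUV hz)) (hf.deriv_ne_zero z hz)

theorem isConformalOn_sub_div (a : ℂ) {c : ℂ} (hc : c ≠ 0) (U : Set ℂ) :
    IsConformalOn (fun z ↦ (z - a) / c) U :=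
  isConformalOn_of_hasDerivAt (fun z _ ↦ ((hasDerivAt_id z).sub_const a).div_const c)
    (fun _ _ _ _ h ↦ sub_left_inj.1 ((div_left_inj' hc).1 h)) fun _ _ ↦ one_div_ne_zero hc

theorem hasDerivAt_of_sq_eq {h ψ : ℂ → ℂ} {z ψ' : ℂ} (hc : ContinuousAt h z)
    (hsq : ∀ᶠ w in 𝓝 z, h w ^ 2 = ψ w) (h0 : h z ≠ 0) (hψ : HasDerivAt ψ ψ' z) :
    HasDerivAt h (ψ' / (2 * h z)) z := by
  have hsum : Tendsto (fun w ↦ h w + h z) (𝓝[≠] z) (𝓝 (2 * h z)) := by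
    rw [two_mul]
    exact (hc.add continuousAt_const).tendsto.mono_left nhdsWithin_le_nhds
  have h2 : 2 * h z ≠ 0 := mul_ne_zero two_ne_zero h0
  rw [hasDerivAt_iff_tendsto_slope] at hψ ⊢
  refine (hψ.div hsum h2).congr' ?_
  filter_upwards [hsum.eventually_ne h2, nhdsWithin_le_nhds hsq] with w hw hwψ
  rw [Pi.div_apply, slope_def_field, slope_def_field, ← hwψ, ← hsq.self_of_nhds, div_eq_iff hw]
  ring

theorem IsConformalOn.exists_sqrt {f : ℂ → ℂ} {U : Set ℂ} (hf : IsConformalOn f U)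
    (hU : IsOpen U) (hlog : HasLogOn f U) :
    ∃ h, IsConformalOn h U ∧ ∀ z ∈ U, h z ^ 2 = f z ∧ deriv h z = deriv f z / (2 * h z) := by
  obtain ⟨l, hl, hexp⟩ := hlog
  have hsq : ∀ z ∈ U, exp (l z / 2) ^ 2 = f z := fun z hz ↦ by
    rw [← hexp z hz, ← exp_nat_mul]
    push_cast
    ring_nf
  have hder : ∀ z ∈ U, HasDerivAt (fun z ↦ exp (l z / 2)) (deriv f z / (2 * exp (l z / 2))) z :=
    fun z hz ↦ hasDerivAt_of_sq_eq ((hl.div_const 2).cexp.continuousAt (hU.mem_nhds hz))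
      (eventually_of_mem (hU.mem_nhds hz) hsq) (exp_ne_zero _) (hf.hasDerivAt hU hz)
  refine ⟨_, isConformalOn_of_hasDerivAt hder (fun z hz y hy hzy ↦ hf.injOn hz hy ?_)
    fun z hz ↦ div_ne_zero (hf.deriv_ne_zero z hz) (mul_ne_zero two_ne_zero (exp_ne_zero _)),
    fun z hz ↦ ⟨hsq z hz, (hder z hz).deriv⟩⟩
  rw [← hsq z hz, ← hsq y hy, hzy]

/-- The Blaschke factor with zero `a`, an automorphism of the unit disc when `‖a‖ < 1`. -/
noncomputable def blaschke (a z : ℂ) : ℂ := (z - a) / (1 - (starRingEnd ℂ) a * z)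

section Blaschke

variable {a z : ℂ}

theorem blaschke_self (a : ℂ) : blaschke a a = 0 := by simp [blaschke]

theorem blaschke_zero (a : ℂ) : blaschke a 0 = -a := by simp [blaschke]

theorem one_sub_conj_mul_ne_zero (ha : ‖a‖ < 1) (hz : ‖z‖ < 1) : 1 - (starRingEnd ℂ) a * z ≠ 0 := by
  intro h
  have hnorm : ‖a‖ * ‖z‖ = 1 := by
    rw [← RCLike.norm_conj a, ← norm_mul, ← sub_eq_zero.1 h, norm_one]
  nlinarith [norm_nonneg a, norm_nonneg z]

theorem norm_one_sub_conj_mul_sq_sub_norm_sub_sq (a z : ℂ) :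
    ‖1 - (starRingEnd ℂ) a * z‖ ^ 2 - ‖z - a‖ ^ 2 = (1 - ‖a‖ ^ 2) * (1 - ‖z‖ ^ 2) := by
  simp only [← normSq_eq_norm_sq, normSq_apply, sub_re, one_re, mul_re, conj_re, conj_im, sub_im,
    one_im, mul_im]
  ring

theorem mapsTo_blaschke (ha : ‖a‖ < 1) : MapsTo (blaschke a) (ball 0 1) (ball 0 1) := by
  intro z hz
  rw [mem_ball_zero_iff] at hz ⊢
  rw [blaschke, norm_div, div_lt_one (norm_pos_iff.2 (one_sub_conj_mul_ne_zero ha hz))]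
  have hpos : 0 < (1 - ‖a‖ ^ 2) * (1 - ‖z‖ ^ 2) := by
    apply mul_pos <;> nlinarith [norm_nonneg a, norm_nonneg z]
  exact lt_of_pow_lt_pow_left₀ 2 (norm_nonneg _)
    (by linarith [norm_one_sub_conj_mul_sq_sub_norm_sub_sq a z])

theorem hasDerivAt_blaschke (ha : ‖a‖ < 1) (hz : ‖z‖ < 1) : HasDerivAt (blaschke a)
    ((1 - (starRingEnd ℂ) a * a) / (1 - (starRingEnd ℂ) a * z) ^ 2) z := by
  have hden : HasDerivAt (fun z ↦ 1 - (starRingEnd ℂ) a * z) (-((starRingEnd ℂ) a * 1)) z :=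
    ((hasDerivAt_id z).const_mul _).const_sub 1
  refine (((hasDerivAt_id z).sub_const a).div hden
    (one_sub_conj_mul_ne_zero ha hz)).congr_deriv ?_
  simp only [id]
  ring

theorem isConformalOn_blaschke (ha : ‖a‖ < 1) : IsConformalOn (blaschke a) (ball 0 1) := by
  refine isConformalOn_of_hasDerivAt
    (fun z hz ↦ hasDerivAt_blaschke ha (mem_ball_zero_iff.1 hz)) (fun z hz w hw h ↦ ?_)
    fun z hz ↦ div_ne_zero (one_sub_conj_mul_ne_zero ha ha)
      (pow_ne_zero _ (one_sub_conj_mul_ne_zero ha (mem_ball_zero_iff.1 hz)))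
  rw [blaschke, blaschke, div_eq_div_iff
    (one_sub_conj_mul_ne_zero ha (mem_ball_zero_iff.1 hz))
    (one_sub_conj_mul_ne_zero ha (mem_ball_zero_iff.1 hw))] at h
  have hmul : (z - w) * (1 - (starRingEnd ℂ) a * a) = 0 := by linear_combination h
  exact sub_eq_zero.1 ((mul_eq_zero.1 hmul).resolve_right (one_sub_conj_mul_ne_zero ha ha))

theorem norm_one_sub_conj_mul_self (ha : ‖a‖ < 1) : ‖1 - (starRingEnd ℂ) a * a‖ = 1 - ‖a‖ ^ 2 := by
  rw [mul_comm, mul_conj, normSq_eq_norm_sq, ← ofReal_one, ← ofReal_sub, norm_real,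
    Real.norm_of_nonneg (by nlinarith [norm_nonneg a])]

theorem norm_deriv_blaschke_zero (ha : ‖a‖ < 1) : ‖deriv (blaschke a) 0‖ = 1 - ‖a‖ ^ 2 := by
  rw [(hasDerivAt_blaschke ha (by simp)).deriv, mul_zero, sub_zero, one_pow, div_one,
    norm_one_sub_conj_mul_self ha]

theorem norm_deriv_blaschke_self (ha : ‖a‖ < 1) : ‖deriv (blaschke a) a‖ = (1 - ‖a‖ ^ 2)⁻¹ := by
  have hne : 1 - ‖a‖ ^ 2 ≠ 0 := by
    rw [← norm_one_sub_conj_mul_self ha]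
    exact norm_ne_zero_iff.2 (one_sub_conj_mul_ne_zero ha ha)
  rw [(hasDerivAt_blaschke ha ha).deriv, norm_div, norm_pow, norm_one_sub_conj_mul_self ha]
  field_simp

end Blaschke

/-- Koebe's square-root trick: a conformal map into the disc fixing the base point and omitting a
value is `z ↦ z ^ 2` between two disc automorphisms after another such map, and that composite is a
strict contraction at `0`. -/
theorem IsConformalOn.exists_norm_deriv_lt {U : Set ℂ} {f : ℂ → ℂ} {p w : ℂ}
    (hf : IsConformalOn f U) (hU : IsOpen U)
    (hlog : ∀ ψ : ℂ → ℂ, ContinuousOn ψ U → (∀ z ∈ U, ψ z ≠ 0) → HasLogOn ψ U)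
    (hmaps : MapsTo f U (ball 0 1)) (hp : p ∈ U) (hfp : f p = 0) (hw : ‖w‖ < 1)
    (hwU : w ∉ f '' U) :
    ∃ F, IsConformalOn F U ∧ MapsTo F U (ball 0 1) ∧ F p = 0 ∧ ‖deriv f p‖ < ‖deriv F p‖ := by
  have hψ : IsConformalOn (blaschke w ∘ f) U :=
    (isConformalOn_blaschke hw).comp hf isOpen_ball hU hmaps
  have hψ0 : ∀ z ∈ U, (blaschke w ∘ f) z ≠ 0 := fun z hz h ↦ by
    have hfz := (isConformalOn_blaschke hw).injOn (hmaps hz) (mem_ball_zero_iff.2 hw)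
      (h.trans (blaschke_self w).symm)
    exact hwU ⟨z, hz, hfz⟩
  obtain ⟨h, hh, hsq⟩ := hψ.exists_sqrt hU (hlog _ hψ.differentiableOn.continuousOn hψ0)
  have hmapsh : MapsTo h U (ball 0 1) := fun z hz ↦ by
    have := mem_ball_zero_iff.1 (mapsTo_blaschke hw (hmaps hz))
    rw [← Function.comp_apply (f := blaschke w), ← (hsq z hz).1, norm_pow,
      pow_lt_one_iff_of_nonneg (norm_nonneg _) two_ne_zero] at this
    exact mem_ball_zero_iff.2 this
  have hc1 : ‖h p‖ < 1 := mem_ball_zero_iff.1 (hmapsh hp)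
  have hcw : ‖h p‖ ^ 2 = ‖w‖ := by
    rw [← norm_pow, (hsq p hp).1, Function.comp_apply, hfp, blaschke_zero, norm_neg]
  have hc0 : 0 < ‖h p‖ := norm_pos_iff.2 fun h0 ↦ hψ0 p hp (by rw [← (hsq p hp).1, h0]; simp)
  refine ⟨blaschke (h p) ∘ h, (isConformalOn_blaschke hc1).comp hh isOpen_ball hU hmapsh,
    (mapsTo_blaschke hc1).comp hmapsh, blaschke_self _, ?_⟩
  have hderψ : ‖deriv (blaschke w ∘ f) p‖ = (1 - ‖w‖ ^ 2) * ‖deriv f p‖ := by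
    rw [((isConformalOn_blaschke hw).hasDerivAt isOpen_ball (hmaps hp)).comp p
      (hf.hasDerivAt hU hp) |>.deriv, norm_mul, hfp, norm_deriv_blaschke_zero hw]
  have hderF : ‖deriv (blaschke (h p) ∘ h) p‖ =
      (1 + ‖h p‖ ^ 2) / (2 * ‖h p‖) * ‖deriv f p‖ := by
    rw [((isConformalOn_blaschke hc1).hasDerivAt isOpen_ball (hmapsh hp)).comp p
      (hh.hasDerivAt hU hp) |>.deriv, norm_mul, norm_deriv_blaschke_self hc1, (hsq p hp).2,
      norm_div, hderψ, norm_mul, Complex.norm_two, ← hcw]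
    have : 1 - ‖h p‖ ^ 2 ≠ 0 := by nlinarith
    field_simp
    ring
  rw [hderF]
  refine lt_mul_of_one_lt_left (norm_pos_iff.2 (hf.deriv_ne_zero p hp)) ?_
  rw [one_lt_div (by positivity)]
  nlinarith [sq_pos_of_pos (sub_pos.2 hc1)]

theorem le_norm_of_forall_sphere_le_norm {f : ℂ → ℂ} {b : ℂ} {r m : ℝ} (hr : 0 < r) (hm : 0 < m)
    (hf : DifferentiableOn ℂ f (closedBall b r)) (h0 : ∀ z ∈ closedBall b r, f z ≠ 0)
    (hfm : ∀ z ∈ sphere b r, m ≤ ‖f z‖) : m ≤ ‖f b‖ := by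
  have hd : DiffContOnCl ℂ (fun z ↦ (f z)⁻¹) (ball b r) :=
    DifferentiableOn.diffContOnCl (by rw [closure_ball _ hr.ne']; exact hf.inv h0)
  have hle : ‖(f b)⁻¹‖ ≤ m⁻¹ := by
    refine norm_le_of_forall_mem_frontier_norm_le isBounded_ball hd (fun z hz ↦ ?_)
      (subset_closure (mem_ball_self hr))
    rw [norm_inv]
    rw [frontier_ball _ hr.ne'] at hz
    exact inv_anti₀ hm (hfm z hz)
  rw [norm_inv] at hle
  exact (inv_le_inv₀ (norm_pos_iff.2 (h0 b (mem_closedBall_self hr.le))) hm).1 hle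

section Limits

variable {ι : Type*} {φ : Filter ι} {U : Set ℂ} {F : ι → ℂ → ℂ} {f : ℂ → ℂ}

/-- **Hurwitz's theorem**. -/
theorem eventually_eq_zero_of_tendstoLocallyUniformlyOn [φ.NeBot] {b : ℂ} (hU : IsOpen U)
    (hF : ∀ n, DifferentiableOn ℂ (F n) U) (hlim : TendstoLocallyUniformlyOn F f φ U)
    (h0 : ∀ n, ∀ z ∈ U, F n z ≠ 0) (hb : b ∈ U) (hfb : f b = 0) : ∀ᶠ z in 𝓝 b, f z = 0 := by
  have hfd : DifferentiableOn ℂ f U := hlim.differentiableOn (Eventually.of_forall hF) hU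
  refine (hfd.analyticAt (hU.mem_nhds hb)).eventually_eq_zero_or_eventually_ne_zero.resolve_right
    fun hne ↦ ?_
  obtain ⟨r, hr, hball⟩ := nhds_basis_closedBall.mem_iff.1
    (inter_mem (eventually_nhdsWithin_iff.1 hne) (hU.mem_nhds hb))
  have hrU : closedBall b r ⊆ U := fun z hz ↦ (hball hz).2
  obtain ⟨w, hw, hmin⟩ := (isCompact_sphere b r).exists_isMinOn (f := fun z ↦ ‖f z‖)
    (NormedSpace.sphere_nonempty.2 hr.le)
    (hfd.continuousOn.mono (sphere_subset_closedBall.trans hrU)).norm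
  have hpos : 0 < ‖f w‖ :=
    norm_pos_iff.2 ((hball (sphere_subset_closedBall hw)).1 (ne_of_mem_sphere hw hr.ne'))
  obtain ⟨n, hn⟩ := (Metric.tendstoUniformlyOn_iff.1
    ((tendstoLocallyUniformlyOn_iff_forall_isCompact hU).1 hlim _ hrU (isCompact_closedBall _ _))
    (‖f w‖ / 2) (half_pos hpos)).exists
  have hle : ‖f w‖ / 2 ≤ ‖F n b‖ := by
    refine le_norm_of_forall_sphere_le_norm hr (half_pos hpos) ((hF n).mono hrU)
      (fun z hz ↦ h0 n z (hrU hz)) fun z hz ↦ ?_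
    have hwz : ‖f w‖ ≤ ‖f z‖ := hmin hz
    have hdist := hn z (sphere_subset_closedBall hz)
    rw [dist_eq_norm] at hdist
    linarith [norm_sub_norm_le (f z) (F n z)]
  have hdist := hn b (mem_closedBall_self hr.le)
  rw [hfb, dist_zero_left] at hdist
  exact hdist.not_ge hle

theorem IsConformalOn.of_tendstoLocallyUniformlyOn [φ.NeBot] {p : ℂ} (hU : IsOpen U)
    (hc : IsPreconnected U) (hF : ∀ n, IsConformalOn (F n) U)
    (hlim : TendstoLocallyUniformlyOn F f φ U) (hp : p ∈ U) (hfp : deriv f p ≠ 0) :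
    IsConformalOn f U := by
  have hFd : ∀ n, DifferentiableOn ℂ (F n) U := fun n ↦ (hF n).differentiableOn
  have hfd : DifferentiableOn ℂ f U := hlim.differentiableOn (Eventually.of_forall hFd) hU
  have hfa : AnalyticOnNhd ℂ f U := hfd.analyticOnNhd hU
  refine ⟨hfd, fun a ha b hb hab ↦ ?_, fun b hb hfb ↦ hfp ?_⟩
  · by_contra hne
    have hlim_sub : TendstoLocallyUniformlyOn (fun n z ↦ F n z - F n a) (fun z ↦ f z - f a) φ
        (U \ {a}) := by
      rw [Metric.tendstoLocallyUniformlyOn_iff] at hlim ⊢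
      intro ε hε x hx
      obtain ⟨t, ht, htF⟩ := hlim (ε / 2) (half_pos hε) x hx.1
      refine ⟨t, nhdsWithin_mono x sdiff_subset ht, ?_⟩
      obtain ⟨s, hs, hsF⟩ := hlim (ε / 2) (half_pos hε) a ha
      filter_upwards [htF, hsF] with n hn hna y hy
      linarith [hn y hy, hna a (mem_of_mem_nhdsWithin ha hs),
        dist_sub_sub_le (f y) (f a) (F n y) (F n a)]
    have hconst : EqOn (fun z ↦ f z - f a) 0 U :=
      (hfa.sub analyticOnNhd_const).eqOn_zero_of_preconnected_of_eventuallyEq_zero hc hb <|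
        eventually_eq_zero_of_tendstoLocallyUniformlyOn (hU.sdiff isClosed_singleton)
          (fun n ↦ ((hFd n).sub_const _).mono sdiff_subset) hlim_sub
          (fun n z hz h ↦ hz.2 ((hF n).injOn hz.1 ha (sub_eq_zero.1 h))) ⟨hb, Ne.symm hne⟩
          (sub_eq_zero.2 hab.symm)
    refine hfp ?_
    have hev : f =ᶠ[𝓝 p] fun _ ↦ f a :=
      eventually_of_mem (hU.mem_nhds hp) fun z hz ↦ sub_eq_zero.1 (hconst hz)
    rw [hev.deriv_eq, deriv_const]
  · exact hfa.deriv.eqOn_zero_of_preconnected_of_eventuallyEq_zero hc hb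
      (eventually_eq_zero_of_tendstoLocallyUniformlyOn hU (fun n ↦ (hFd n).deriv hU)
        (hlim.deriv (Eventually.of_forall hFd) hU) (fun n ↦ (hF n).deriv_ne_zero) hb hfb) hp

theorem equicontinuousAt_of_norm_le {M : ℝ} {x : ℂ} (hU : U ∈ 𝓝 x)
    (hF : ∀ n, DifferentiableOn ℂ (F n) U) (hM : ∀ n, ∀ z ∈ U, ‖F n z‖ ≤ M) :
    EquicontinuousAt F x := by
  obtain ⟨R, hR, hRU⟩ := Metric.mem_nhds_iff.1 hU
  refine Metric.equicontinuousAt_of_continuity_modulus (fun y ↦ 2 * M / R * dist y x) ?_ F ?_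
  · have : Continuous fun y ↦ 2 * M / R * dist y x := by fun_prop
    simpa using this.tendsto x
  · filter_upwards [ball_mem_nhds x hR] with y hy n
    rw [dist_comm]
    refine dist_le_div_mul_dist_of_mapsTo_ball ((hF n).mono hRU) (fun z hz ↦ ?_) hy
    rw [mem_closedBall, dist_eq_norm, two_mul]
    exact (norm_sub_le _ _).trans (add_le_add (hM n z (hRU hz)) (hM n x (mem_of_mem_nhds hU)))

/-- **Montel's theorem**, with an ultrafilter in place of a subsequence. -/
theorem exists_tendstoLocallyUniformlyOn_of_norm_le {M : ℝ} (φ : Ultrafilter ι) (hU : IsOpen U)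
    (hF : ∀ n, DifferentiableOn ℂ (F n) U) (hM : ∀ n, ∀ z ∈ U, ‖F n z‖ ≤ M) :
    ∃ f, TendstoLocallyUniformlyOn F f (φ : Filter ι) U := by
  have hpt : ∀ z, ∃ y, z ∈ U → Tendsto (F · z) φ (𝓝 y) := fun z ↦ by
    by_cases hz : z ∈ U
    · obtain ⟨y, -, hy⟩ := (isCompact_closedBall (0 : ℂ) M).ultrafilter_le_nhds (φ.map (F · z))
        (le_principal_iff.2 (mem_map.2 (univ_mem' fun n ↦ mem_closedBall_zero_iff.2 (hM n z hz))))
      exact ⟨y, fun _ ↦ hy⟩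
    · exact ⟨0, fun h ↦ absurd h hz⟩
  choose f hf using hpt
  refine ⟨f, (tendstoLocallyUniformlyOn_iff_forall_isCompact hU).2 fun K hKU hK ↦ ?_⟩
  have heq : EquicontinuousOn F K := fun x hx ↦
    (equicontinuousAt_of_norm_le (hU.mem_nhds (hKU hx)) hF hM).equicontinuousWithinAt K
  have htend := (EquicontinuousOn.tendsto_uniformOnFun_iff_pi' (𝔖 := {K})
    (forall_eq.2 hK) (forall_eq.2 heq) φ f).2
    (tendsto_pi_nhds.2 fun z ↦ hf z (hKU (by simpa using z.2)))
  exact UniformOnFun.tendsto_iff_tendstoUniformlyOn.1 htend K rfl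

end Limits

section Extremal

variable {U : Set ℂ} {p : ℂ}

theorem mapsTo_ball_of_mapsTo_closedBall {f : ℂ → ℂ} (hU : IsOpen U) (hc : IsPreconnected U)
    (hf : DifferentiableOn ℂ f U) (hmaps : MapsTo f U (closedBall 0 1)) (hp : p ∈ U)
    (hfp : deriv f p ≠ 0) : MapsTo f U (ball 0 1) := by
  intro z hz
  refine mem_ball_zero_iff.2 ((mem_closedBall_zero_iff.1 (hmaps hz)).lt_of_ne fun h1 ↦ hfp ?_)
  have hconst : EqOn f (Function.const ℂ (f z)) U :=
    eqOn_of_isPreconnected_of_isMaxOn_norm hc hU hf hz fun y hy ↦ by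
      simpa [h1] using hmaps hy
  have hev : f =ᶠ[𝓝 p] Function.const ℂ (f z) := eventually_of_mem (hU.mem_nhds hp) hconst
  exact hev.deriv_eq.trans (deriv_const p (f z))

theorem exists_isConformalOn_mapsTo_ball (hb : Bornology.IsBounded U) (p : ℂ) :
    ∃ f, IsConformalOn f U ∧ MapsTo f U (ball 0 1) ∧ f p = 0 := by
  obtain ⟨D, hDpos, hD⟩ := hb.subset_ball_lt 0 p
  have hscale := isConformalOn_sub_div p (ofReal_ne_zero.2 hDpos.ne') U
  refine ⟨_, hscale, fun z hz ↦ ?_, by simp⟩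
  rw [mem_ball_zero_iff, norm_div, norm_real, Real.norm_of_nonneg hDpos.le, div_lt_one hDpos,
    ← dist_eq_norm]
  exact hD hz

theorem exists_isConformalOn_forall_norm_deriv_le (hU : IsOpen U) (hc : IsPreconnected U)
    (hb : Bornology.IsBounded U) (hp : p ∈ U) :
    ∃ f, IsConformalOn f U ∧ MapsTo f U (ball 0 1) ∧ f p = 0 ∧
      ∀ g, IsConformalOn g U → MapsTo g U (ball 0 1) → g p = 0 → ‖deriv g p‖ ≤ ‖deriv f p‖ := by
  set 𝓕 : Set (ℂ → ℂ) := {f | IsConformalOn f U ∧ MapsTo f U (ball 0 1) ∧ f p = 0}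
  set S : Set ℝ := (fun f ↦ ‖deriv f p‖) '' 𝓕
  have hbdd : BddAbove S := by
    obtain ⟨r, hr, hrU⟩ := Metric.isOpen_iff.1 hU p hp
    refine ⟨1 / r, ?_⟩
    rintro _ ⟨f, ⟨hf, hmaps, hfp⟩, rfl⟩
    refine norm_deriv_le_div_of_mapsTo_ball (hf.differentiableOn.mono hrU) ?_ hr
    rw [hfp]
    exact hmaps.mono hrU ball_subset_closedBall
  obtain ⟨f₀, hf₀⟩ : 𝓕.Nonempty := exists_isConformalOn_mapsTo_ball hb p
  have hpos : 0 < sSup S := (norm_pos_iff.2 (hf₀.1.deriv_ne_zero p hp)).trans_le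
    (le_csSup hbdd ⟨f₀, hf₀, rfl⟩)
  have hne : S.Nonempty := ⟨_, f₀, hf₀, rfl⟩
  obtain ⟨u, -, hu, huS⟩ := exists_seq_tendsto_sSup hne hbdd
  choose F hF hFu using huS
  have hFd : ∀ n, DifferentiableOn ℂ (F n) U := fun n ↦ (hF n).1.differentiableOn
  have hFle : ∀ n, ∀ z ∈ U, ‖F n z‖ ≤ 1 := fun n z hz ↦ (mem_ball_zero_iff.1 ((hF n).2.1 hz)).le
  obtain ⟨f, hlim⟩ := exists_tendstoLocallyUniformlyOn_of_norm_le (hyperfilter ℕ) hU hFd hFle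
  have hder : ‖deriv f p‖ = sSup S := by
    refine tendsto_nhds_unique ((hlim.deriv (Eventually.of_forall hFd) hU).tendsto_at hp).norm ?_
    exact (hu.mono_left Nat.hyperfilter_le_atTop).congr fun n ↦ (hFu n).symm
  have hder0 : deriv f p ≠ 0 := norm_pos_iff.1 (hder ▸ hpos)
  have hf : IsConformalOn f U :=
    .of_tendstoLocallyUniformlyOn hU hc (fun n ↦ (hF n).1) hlim hp hder0
  have hfle : MapsTo f U (closedBall 0 1) := fun z hz ↦ mem_closedBall_zero_iff.2 <|
    le_of_tendsto (hlim.tendsto_at hz).norm (Eventually.of_forall fun n ↦ hFle n z hz)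
  refine ⟨f, hf, mapsTo_ball_of_mapsTo_closedBall hU hc hf.differentiableOn hfle hp hder0,
    tendsto_nhds_unique (hlim.tendsto_at hp) ?_, fun g hg hmaps hgp ↦ ?_⟩
  · simp only [fun n ↦ (hF n).2.2, tendsto_const_nhds]
  · exact hder ▸ le_csSup hbdd ⟨g, ⟨hg, hmaps, hgp⟩, rfl⟩

/-- **Riemann mapping theorem**. -/
theorem exists_isConformalOn_image_eq_ball (hU : IsOpen U) (hc : IsPreconnected U)
    (hb : Bornology.IsBounded U) (hp : p ∈ U)
    (hlog : ∀ ψ : ℂ → ℂ, ContinuousOn ψ U → (∀ z ∈ U, ψ z ≠ 0) → HasLogOn ψ U) :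
    ∃ f, IsConformalOn f U ∧ f p = 0 ∧ f '' U = ball 0 1 := by
  obtain ⟨f, hf, hmaps, hfp, hmax⟩ := exists_isConformalOn_forall_norm_deriv_le hU hc hb hp
  refine ⟨f, hf, hfp, hmaps.image_subset.antisymm fun w hw ↦ ?_⟩
  by_contra hwU
  obtain ⟨F, hF, hmapsF, hFp, hlt⟩ :=
    hf.exists_norm_deriv_lt hU hlog hmaps hp hfp (mem_ball_zero_iff.1 hw) hwU
  exact (hmax F hF hmapsF hFp).not_gt hlt

end Extremal

end RiemannMapping

section LengthArea

open MeasureTheory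

theorem det_restrictScalars_toSpanSingleton (c : ℂ) :
    ((ContinuousLinearMap.toSpanSingleton ℂ c).restrictScalars ℝ).det = ‖c‖ ^ 2 := by
  have hdet : LinearMap.det (Algebra.lmul ℝ ℂ c) = ‖c‖ ^ 2 := by
    rw [← Algebra.norm_apply, Algebra.norm_complex_apply, normSq_eq_norm_sq]
  rw [← hdet, ContinuousLinearMap.det]
  congr 1
  ext
  simp [mul_comm]

theorem lintegral_enorm_deriv_sq_eq_volume_image {g : ℂ → ℂ} {s : Set ℂ} (hs : MeasurableSet s)
    (hg : ∀ z ∈ s, DifferentiableAt ℂ g z) (hinj : InjOn g s) :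
    ∫⁻ z in s, ‖deriv g z‖ₑ ^ 2 = volume (g '' s) := by
  rw [← lintegral_abs_det_fderiv_eq_addHaar_image volume hs
    (fun z hz ↦ ((hg z hz).hasDerivAt.hasFDerivAt.restrictScalars ℝ).hasFDerivWithinAt) hinj]
  refine lintegral_congr fun z ↦ ?_
  rw [det_restrictScalars_toSpanSingleton, abs_of_nonneg (by positivity),
    ENNReal.ofReal_pow (norm_nonneg _), ofReal_norm]

theorem sq_lintegral_le_measure_univ_mul_lintegral_sq {α : Type*} [MeasurableSpace α]
    (μ : Measure α) {f : α → ENNReal} (hf : AEMeasurable f μ) :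
    (∫⁻ x, f x ∂μ) ^ 2 ≤ μ univ * ∫⁻ x, f x ^ 2 ∂μ := by
  have holder := ENNReal.lintegral_mul_le_Lp_mul_Lq μ Real.HolderConjugate.two_two hf
    (aemeasurable_const (b := 1))
  simp only [Pi.mul_apply, mul_one, lintegral_const, ENNReal.rpow_two, one_pow, one_mul] at holder
  calc (∫⁻ x, f x ∂μ) ^ 2
      ≤ ((∫⁻ x, f x ^ 2 ∂μ) ^ (1 / 2 : ℝ) * μ univ ^ (1 / 2 : ℝ)) ^ 2 := by gcongr
    _ = μ univ * ∫⁻ x, f x ^ 2 ∂μ := by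
        rw [mul_pow, ← ENNReal.rpow_mul_natCast, ← ENNReal.rpow_mul_natCast]
        norm_num [mul_comm]

theorem sq_lintegral_enorm_deriv_le {g : ℂ → ℂ} {s : Set ℂ} (hs : MeasurableSet s)
    (hg : ∀ z ∈ s, DifferentiableAt ℂ g z) (hinj : InjOn g s) :
    (∫⁻ z in s, ‖deriv g z‖ₑ) ^ 2 ≤ volume s * volume (g '' s) := by
  rw [← lintegral_enorm_deriv_sq_eq_volume_image hs hg hinj]
  simpa using sq_lintegral_le_measure_univ_mul_lintegral_sq (volume.restrict s)
    (measurable_deriv g).enorm.aemeasurable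

theorem setLIntegral_reProdIm {s t : Set ℝ} (hs : MeasurableSet s) (ht : MeasurableSet t)
    {F : ℂ → ENNReal} (hF : Measurable F) :
    ∫⁻ z in s ×ℂ t, F z = ∫⁻ y in t, ∫⁻ x in s, F (x + y * I) := by
  have hFsymm : Measurable (F ∘ measurableEquivRealProd.symm) :=
    hF.comp measurableEquivRealProd.symm.measurable
  have hcoord := volume_preserving_equiv_real_prod.setLIntegral_comp_preimage
    (hs.prod ht) hFsymm
  simp only [Function.comp_apply, MeasurableEquiv.symm_apply_apply] at hcoord
  refine hcoord.trans ((setLIntegral_prod_symm _ hFsymm.aemeasurable).trans ?_)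
  simp only [Function.comp_apply, measurableEquivRealProd_symm_apply, mk_eq_add_mul_I]

theorem enorm_sub_le_lintegral_deriv_of_mapClusterPt {E : Type*} [NormedAddCommGroup E]
    [NormedSpace ℝ E] {f : ℝ → E} {a b : ℝ} {x : E} (hab : a < b)
    (hf : ContDiffOn ℝ 1 f (Ico a b)) (hx : MapClusterPt x (𝓝[<] b) f) :
    ‖f a - x‖ₑ ≤ ∫⁻ u in Ioo a b, ‖deriv f u‖ₑ := by
  have hclosed : IsClosed {y | ‖f a - y‖ₑ ≤ ∫⁻ u in Ioo a b, ‖deriv f u‖ₑ} :=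
    isClosed_le (by fun_prop) continuous_const
  refine hclosed.mem_of_mapClusterPt hx ?_
  filter_upwards [Ioo_mem_nhdsLT hab] with u hu
  calc ‖f a - f u‖ₑ = ‖f u - f a‖ₑ := enorm_sub_rev _ _
    _ ≤ ∫⁻ v in Icc a u, ‖deriv f v‖ₑ := enorm_sub_le_lintegral_deriv_of_contDiffOn_Icc
        (hf.mono (Icc_subset_Ico_right hu.2)) hu.1.le
    _ = ∫⁻ v in Ioo a u, ‖deriv f v‖ₑ := by rw [restrict_Ioo_eq_restrict_Icc]
    _ ≤ ∫⁻ v in Ioo a b, ‖deriv f v‖ₑ := lintegral_mono_set (Ioo_subset_Ioo_right hu.2.le)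

theorem enorm_sub_le_lintegral_deriv_horizontal {g : ℂ → ℂ} {c θ : ℝ} {t : Set ℝ} {x : ℂ}
    (ht : IsOpen t) (hg : DifferentiableOn ℂ g (Iio 0 ×ℂ t)) (hc : c < 0) (hθ : θ ∈ t)
    (hx : MapClusterPt x (𝓝[<] 0) fun u : ℝ ↦ g (u + θ * I)) :
    ‖g (c + θ * I) - x‖ₑ ≤ ∫⁻ u in Ioo c 0, ‖deriv g (u + θ * I)‖ₑ := by
  have hopen : IsOpen (Iio 0 ×ℂ t) := isOpen_Iio.reProdIm ht
  have hmem {u : ℝ} (hu : u < 0) : (u + θ * I : ℂ) ∈ Iio 0 ×ℂ t := by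
    simpa [mem_reProdIm] using ⟨hu, hθ⟩
  have hsmooth : ContDiffOn ℝ 1 (fun u : ℝ ↦ g (u + θ * I)) (Ico c 0) :=
    ((hg.contDiffOn hopen).restrict_scalars ℝ).comp
      (ofRealCLM.contDiff.add contDiff_const).contDiffOn fun u hu ↦ hmem hu.2
  refine (enorm_sub_le_lintegral_deriv_of_mapClusterPt hc hsmooth hx).trans_eq ?_
  refine setLIntegral_congr_fun measurableSet_Ioo fun u hu ↦ ?_
  have hderiv : HasDerivAt (fun z ↦ g (z + θ * I)) (deriv g (u + θ * I)) (u : ℂ) :=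
    ((hg.differentiableAt (hopen.mem_nhds (hmem hu.2))).hasDerivAt).comp_add_const _ _
  simp only [hderiv.comp_ofReal.deriv]

theorem sq_lintegral_enorm_sub_le {g : ℂ → ℂ} {c : ℝ} {t : Set ℝ} {x : ℂ} (ht : IsOpen t)
    (hg : DifferentiableOn ℂ g (Iio 0 ×ℂ t)) (hinj : InjOn g (Iio 0 ×ℂ t))
    (hx : ∀ θ ∈ t, MapClusterPt x (𝓝[<] 0) fun u : ℝ ↦ g (u + θ * I)) (hc : c < 0) :
    (∫⁻ θ in t, ‖g (c + θ * I) - x‖ₑ) ^ 2 ≤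
      volume (Ioo c 0 ×ℂ t) * volume (g '' (Iio 0 ×ℂ t)) := by
  have hopen : IsOpen (Iio 0 ×ℂ t) := isOpen_Iio.reProdIm ht
  have hsub : Ioo c 0 ×ℂ t ⊆ Iio 0 ×ℂ t := fun z hz ↦ ⟨hz.1.2, hz.2⟩
  calc (∫⁻ θ in t, ‖g (c + θ * I) - x‖ₑ) ^ 2
      ≤ (∫⁻ θ in t, ∫⁻ u in Ioo c 0, ‖deriv g (u + θ * I)‖ₑ) ^ 2 := by
        gcongr ?_ ^ 2
        exact setLIntegral_mono' ht.measurableSet fun θ hθ ↦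
          enorm_sub_le_lintegral_deriv_horizontal ht hg hc hθ (hx θ hθ)
    _ = (∫⁻ z in Ioo c 0 ×ℂ t, ‖deriv g z‖ₑ) ^ 2 := by
        rw [setLIntegral_reProdIm measurableSet_Ioo ht.measurableSet (measurable_deriv g).enorm]
    _ ≤ volume (Ioo c 0 ×ℂ t) * volume (g '' (Ioo c 0 ×ℂ t)) :=
        sq_lintegral_enorm_deriv_le (isOpen_Ioo.reProdIm ht).measurableSet
          (fun z hz ↦ hg.differentiableAt (hopen.mem_nhds (hsub hz))) (hinj.mono hsub)
    _ ≤ volume (Ioo c 0 ×ℂ t) * volume (g '' (Iio 0 ×ℂ t)) := by gcongr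

theorem volume_reProdIm {s t : Set ℝ} (hs : MeasurableSet s) (ht : MeasurableSet t) :
    volume (s ×ℂ t) = volume s * volume t := by
  rw [← Measure.prod_prod, ← Measure.volume_eq_prod]
  exact volume_preserving_equiv_real_prod.measure_preimage (hs.prod ht).nullMeasurableSet

theorem tendsto_lintegral_enorm_sub_nhds_zero {g : ℂ → ℂ} {t : Set ℝ} {x : ℂ} (ht : IsOpen t)
    (htb : Bornology.IsBounded t) (hg : DifferentiableOn ℂ g (Iio 0 ×ℂ t))
    (hinj : InjOn g (Iio 0 ×ℂ t)) (hb : Bornology.IsBounded (g '' (Iio 0 ×ℂ t)))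
    (hx : ∀ θ ∈ t, MapClusterPt x (𝓝[<] 0) fun u : ℝ ↦ g (u + θ * I)) :
    Tendsto (fun c : ℝ ↦ ∫⁻ θ in t, ‖g (c + θ * I) - x‖ₑ) (𝓝[<] 0) (𝓝 0) := by
  set A := volume t * volume (g '' (Iio 0 ×ℂ t))
  have hA : A ≠ ⊤ := ENNReal.mul_ne_top htb.measure_lt_top.ne hb.measure_lt_top.ne
  have hbound : Tendsto (fun c : ℝ ↦ (ENNReal.ofReal (-c) * A) ^ (2 : ℝ)⁻¹) (𝓝[<] 0) (𝓝 0) := by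
    have hcont : Continuous fun c : ℝ ↦ (ENNReal.ofReal (-c) * A) ^ (2 : ℝ)⁻¹ :=
      (ENNReal.continuous_rpow_const).comp
        ((ENNReal.continuous_mul_const hA).comp (ENNReal.continuous_ofReal.comp continuous_neg))
    simpa using (hcont.tendsto 0).mono_left nhdsWithin_le_nhds
  refine tendsto_of_tendsto_of_tendsto_of_le_of_le' tendsto_const_nhds hbound
    (.of_forall fun _ ↦ zero_le) ?_
  filter_upwards [self_mem_nhdsWithin] with c hc
  have hsq := sq_lintegral_enorm_sub_le ht hg hinj hx hc
  rw [volume_reProdIm measurableSet_Ioo ht.measurableSet, Real.volume_Ioo, mul_assoc,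
    zero_sub] at hsq
  rwa [ENNReal.le_rpow_inv_iff two_pos, ENNReal.rpow_two]

end LengthArea

section BoundaryUniqueness

open MeasureTheory

theorem eq_of_exp_eq_exp_of_abs_im_sub_im_lt {w v : ℂ} (h : exp w = exp v)
    (him : |w.im - v.im| < 2 * Real.pi) : w = v := by
  obtain ⟨k, hk⟩ := Complex.exp_eq_exp_iff_exists_int.1 h
  have hdiff : w.im - v.im = k * (2 * Real.pi) := by simp [hk]
  rw [hdiff, abs_mul, abs_of_pos Real.two_pi_pos] at him
  have hk_lt : |(k : ℝ)| < 1 := by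
    simpa using (mul_lt_iff_lt_one_left Real.two_pi_pos).1 him
  have hk_zero : k = 0 := Int.abs_lt_one_iff.1 (by exact_mod_cast hk_lt)
  simpa [hk_zero] using hk

theorem norm_apply_zero_le_integral_circleMap {G : ℂ → ℂ} {R : ℝ} (hR : 0 < R)
    (hG : DiffContOnCl ℂ G (ball 0 R)) :
    ‖G 0‖ ≤ (2 * Real.pi)⁻¹ * ∫ θ in 0..2 * Real.pi, ‖G (circleMap 0 R θ)‖ := by
  have hmean : Real.circleAverage G 0 R = G 0 :=
    DiffContOnCl.circleAverage (by rwa [abs_of_pos hR])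
  rw [← hmean, Real.circleAverage_def, norm_smul, Real.norm_of_nonneg (by positivity)]
  gcongr
  exact intervalIntegral.norm_integral_le_integral_norm Real.two_pi_pos.le

theorem continuous_comp_circleMap {h : ℂ → ℂ} {R : ℝ} (hR : 0 < R)
    (hh : DiffContOnCl ℂ h (ball 0 R)) : Continuous fun θ ↦ h (circleMap 0 R θ) :=
  hh.continuousOn_ball.comp_continuous (continuous_circleMap 0 R)
    fun θ ↦ circleMap_mem_closedBall 0 hR.le θ

theorem intervalIntegral_eq_mul_of_periodic {P : ℝ → ℝ} {T : ℝ} (hP : Function.Periodic P T)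
    (hc : Continuous P) (n : ℕ) (a : ℝ) :
    ∫ θ in 0..n * T, P θ = n * ∫ θ in a..a + T, P θ := by
  have hmul := hP.intervalIntegral_add_zsmul_eq n 0 fun _ _ ↦ hc.intervalIntegrable _ _
  rw [hP.intervalIntegral_add_eq 0 a] at hmul
  simpa using hmul

/-- The product of the `n` rotates of `h` by the `n`-th roots of unity; it is invariant under
rotation by `2π / n`, so its mean value over a circle is its mean value over an arc. -/
noncomputable def rotationProd (h : ℂ → ℂ) (n : ℕ) (z : ℂ) : ℂ :=
  ∏ k ∈ Finset.range n, h (exp ((2 * Real.pi / n : ℝ) * I) ^ k * z)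

theorem rotationProd_zero (h : ℂ → ℂ) (n : ℕ) : rotationProd h n 0 = h 0 ^ n := by
  simp [rotationProd]

theorem rotationProd_exp_mul (h : ℂ → ℂ) (n : ℕ) (z : ℂ) :
    rotationProd h (n + 1) (exp ((2 * Real.pi / (n + 1 : ℕ) : ℝ) * I) * z) =
      rotationProd h (n + 1) z := by
  set ω := exp ((2 * Real.pi / (n + 1 : ℕ) : ℝ) * I)
  have hω : ω ^ (n + 1) = 1 := by
    rw [← Complex.exp_nat_mul, ← Complex.exp_two_pi_mul_I]
    congr 1
    push_cast
    have : (n + 1 : ℂ) ≠ 0 := Nat.cast_add_one_ne_zero n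
    field_simp
  have hshift (k : ℕ) : ω ^ k * (ω * z) = ω ^ (k + 1) * z := by ring
  simp only [rotationProd, ω] at hω hshift ⊢
  simp only [hshift]
  rw [Finset.prod_range_succ, Finset.prod_range_succ' _ n, hω, pow_zero]

theorem norm_rotation_pow_mul (n k : ℕ) (z : ℂ) :
    ‖exp ((2 * Real.pi / n : ℝ) * I) ^ k * z‖ = ‖z‖ := by
  rw [norm_mul, norm_pow, Complex.norm_exp_ofReal_mul_I, one_pow, one_mul]

theorem diffContOnCl_rotationProd {h : ℂ → ℂ} {R : ℝ} (hR : 0 < R)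
    (hh : DiffContOnCl ℂ h (ball 0 R)) (n : ℕ) : DiffContOnCl ℂ (rotationProd h n) (ball 0 R) := by
  have hmaps (k : ℕ) {s : Set ℝ} : MapsTo (fun z ↦ exp ((2 * Real.pi / n : ℝ) * I) ^ k * z)
      {z | ‖z‖ ∈ s} {z | ‖z‖ ∈ s} := fun z hz ↦ by
    simpa only [mem_ofPred_eq, norm_rotation_pow_mul] using hz
  refine ⟨.fun_finsetProd fun k _ ↦ ?_, continuousOn_finsetProd _ fun k _ ↦ ?_⟩
  · refine hh.differentiableOn.comp (by fun_prop) ?_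
    simpa [ball, dist_zero_right] using hmaps k (s := Iio R)
  · rw [closure_ball _ hR.ne']
    refine hh.continuousOn_ball.comp (by fun_prop) ?_
    simpa [closedBall, dist_zero_right] using hmaps k (s := Iic R)

theorem norm_rotationProd_succ_le {h : ℂ → ℂ} {C : ℝ} (n : ℕ) {z : ℂ}
    (hC : ∀ v, ‖v‖ = ‖z‖ → ‖h v‖ ≤ C) : ‖rotationProd h (n + 1) z‖ ≤ C ^ n * ‖h z‖ := by
  rw [rotationProd, norm_prod, Finset.prod_range_succ', pow_zero, one_mul]
  gcongr
  calc ∏ k ∈ Finset.range n, ‖h (exp ((2 * Real.pi / (n + 1 : ℕ) : ℝ) * I) ^ (k + 1) * z)‖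
      ≤ ∏ _k ∈ Finset.range n, C := Finset.prod_le_prod (fun _ _ ↦ norm_nonneg _)
        fun k _ ↦ hC _ (norm_rotation_pow_mul (n + 1) (k + 1) z)
    _ = C ^ n := by simp

theorem norm_pow_le_integral_arc {h : ℂ → ℂ} {R C : ℝ} (hR : 0 < R)
    (hh : DiffContOnCl ℂ h (ball 0 R)) (hC : ∀ z, ‖z‖ = R → ‖h z‖ ≤ C) (n : ℕ) (a : ℝ) :
    ‖h 0‖ ^ (n + 1) ≤ (2 * Real.pi)⁻¹ * ((n + 1 : ℕ) * (C ^ n *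
      ∫ θ in a..a + 2 * Real.pi / (n + 1 : ℕ), ‖h (circleMap 0 R θ)‖)) := by
  set T : ℝ := 2 * Real.pi / (n + 1 : ℕ)
  set P : ℝ → ℝ := fun θ ↦ ‖rotationProd h (n + 1) (circleMap 0 R θ)‖
  have hGdiff := diffContOnCl_rotationProd hR hh (n + 1)
  have hPcont : Continuous P := (continuous_comp_circleMap hR hGdiff).norm
  have hPper : Function.Periodic P T := fun θ ↦ by
    have hrot : circleMap 0 R (θ + T) = exp (T * I) * circleMap 0 R θ := by
      simp only [circleMap_zero, ofReal_add, add_mul, Complex.exp_add]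
      ring
    simp only [P, hrot, T, rotationProd_exp_mul]
  have hPle (θ : ℝ) : P θ ≤ C ^ n * ‖h (circleMap 0 R θ)‖ :=
    norm_rotationProd_succ_le n fun v hv ↦ hC v (by simpa [abs_of_pos hR] using hv)
  have hNT : (n + 1 : ℕ) * T = 2 * Real.pi := mul_div_cancel₀ _ (by positivity)
  calc ‖h 0‖ ^ (n + 1) = ‖rotationProd h (n + 1) 0‖ := by rw [rotationProd_zero, norm_pow]
    _ ≤ (2 * Real.pi)⁻¹ * ∫ θ in 0..2 * Real.pi, P θ :=
        norm_apply_zero_le_integral_circleMap hR hGdiff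
    _ = (2 * Real.pi)⁻¹ * ((n + 1 : ℕ) * ∫ θ in a..a + T, P θ) := by
        rw [← intervalIntegral_eq_mul_of_periodic hPper hPcont, hNT]
    _ ≤ (2 * Real.pi)⁻¹ * ((n + 1 : ℕ) * ∫ θ in a..a + T, C ^ n * ‖h (circleMap 0 R θ)‖) := by
        gcongr
        exact intervalIntegral.integral_mono (le_add_of_nonneg_right (by positivity))
          (hPcont.intervalIntegrable _ _)
          ((continuous_comp_circleMap hR hh).norm.const_mul _ |>.intervalIntegrable _ _) hPle
    _ = _ := by rw [intervalIntegral.integral_const_mul]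

theorem mapsTo_exp_reProdIm (t : Set ℝ) : MapsTo exp (Iio 0 ×ℂ t) (ball 0 1) := fun w hw ↦ by
  rw [mem_ball_zero_iff, Complex.norm_exp]
  exact Real.exp_lt_one_iff.2 hw.1

theorem tendsto_integral_norm_sub_circleMap {f : ℂ → ℂ} {x : ℂ} {a b : ℝ} (hab : a ≤ b)
    (hba : b ≤ a + 2 * Real.pi) (hf : DifferentiableOn ℂ f (ball 0 1)) (hinj : InjOn f (ball 0 1))
    (hb : Bornology.IsBounded (f '' ball 0 1))
    (hx : ∀ θ ∈ Ioo a b, MapClusterPt x (𝓝[<] 0) fun u : ℝ ↦ f (exp (u + θ * I))) :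
    Tendsto (fun c ↦ ∫ θ in a..b, ‖f (circleMap 0 (Real.exp c) θ) - x‖) (𝓝[<] 0) (𝓝 0) := by
  have hexp := mapsTo_exp_reProdIm (Ioo a b)
  have hexp_inj : InjOn exp (Iio 0 ×ℂ Ioo a b) := fun w hw v hv hwv ↦
    eq_of_exp_eq_exp_of_abs_im_sub_im_lt hwv <| abs_lt.2
      ⟨by linarith [hw.2.1, hv.2.2], by linarith [hw.2.2, hv.2.1]⟩
  have harea := tendsto_lintegral_enorm_sub_nhds_zero (g := f ∘ exp) isOpen_Ioo
    (isBounded_Ioo a b) (hf.comp differentiable_exp.differentiableOn hexp)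
    (hinj.comp hexp_inj hexp) (hb.subset (by rw [image_comp]; gcongr; exact hexp.image_subset)) hx
  refine ((ENNReal.tendsto_toReal ENNReal.zero_ne_top).comp harea).congr' ?_
  filter_upwards [self_mem_nhdsWithin] with c hc
  have hcircle (θ : ℝ) : exp (c + θ * I) = circleMap 0 (Real.exp c) θ := by
    rw [circleMap_zero, ofReal_exp, Complex.exp_add]
  have hcont : Continuous fun θ : ℝ ↦ f (circleMap 0 (Real.exp c) θ) - x :=
    (hf.continuousOn.comp_continuous (continuous_circleMap _ _) fun θ ↦ by
      simpa using hc).sub continuous_const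
  rw [intervalIntegral.integral_of_le hab, integral_Ioc_eq_integral_Ioo,
    integral_norm_eq_lintegral_enorm hcont.aestronglyMeasurable]
  simp only [Function.comp_apply, hcircle]

theorem apply_zero_eq_of_mapClusterPt_radii {f : ℂ → ℂ} {x : ℂ} {a b : ℝ} (hab : a < b)
    (hf : DifferentiableOn ℂ f (ball 0 1)) (hinj : InjOn f (ball 0 1))
    (hb : Bornology.IsBounded (f '' ball 0 1))
    (hx : ∀ θ ∈ Ioo a b, MapClusterPt x (𝓝[<] 0) fun u : ℝ ↦ f (exp (u + θ * I))) : f 0 = x := by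
  obtain ⟨n, hn⟩ := exists_nat_ge (2 * Real.pi / (b - a))
  set T : ℝ := 2 * Real.pi / (n + 1 : ℕ)
  have hT : T ≤ 2 * Real.pi := div_le_self Real.two_pi_pos.le (by simp)
  have hTab : a + T ≤ b := by
    have hba : 0 < b - a := sub_pos.2 hab
    have : T ≤ b - a := by
      rw [div_le_iff₀ (by positivity), ← div_le_iff₀' hba]
      exact hn.trans (by simp)
    linarith
  obtain ⟨M, hM⟩ := hb.exists_norm_le
  have htend := tendsto_integral_norm_sub_circleMap (le_add_of_nonneg_right (by positivity))
    (add_le_add_right hT a) hf hinj hb fun θ hθ ↦ hx θ ⟨hθ.1, hθ.2.trans_le hTab⟩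
  have hbound : ∀ᶠ c : ℝ in 𝓝[<] 0, ‖f 0 - x‖ ^ (n + 1) ≤ (2 * Real.pi)⁻¹ * ((n + 1 : ℕ) *
      ((M + ‖x‖) ^ n * ∫ θ in a..a + T, ‖f (circleMap 0 (Real.exp c) θ) - x‖)) := by
    filter_upwards [self_mem_nhdsWithin] with c hc
    have hsub : closedBall (0 : ℂ) (Real.exp c) ⊆ ball 0 1 :=
      closedBall_subset_ball (Real.exp_lt_one_iff.2 hc)
    refine norm_pow_le_integral_arc (h := fun z ↦ f z - x) (Real.exp_pos c)
      ((hf.mono hsub).diffContOnCl_ball subset_rfl |>.sub_const x) (fun z hz ↦ ?_) n a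
    exact (norm_sub_le _ _).trans (by gcongr; exact hM _ (mem_image_of_mem f (hsub (by simp [hz]))))
  have hzero : ‖f 0 - x‖ ^ (n + 1) ≤ 0 := by
    refine ge_of_tendsto ?_ hbound
    simpa using ((htend.const_mul _).const_mul _).const_mul _
  simpa [sub_eq_zero] using hzero.antisymm (by positivity)

end BoundaryUniqueness

section BoundaryLimits

/-- The open angular sector of all `z ≠ 0` having an argument in `(a, b)`. -/
def sector (a b : ℝ) : Set ℂ := exp '' {w | w.im ∈ Ioo a b}

theorem isOpen_sector (a b : ℝ) : IsOpen (sector a b) :=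
  Complex.isOpenMap_exp _ (isOpen_Ioo.preimage continuous_im)

theorem exp_ofReal_mul_I_mem_sector {a b θ : ℝ} (hθ : θ ∈ Ioo a b) : exp (θ * I) ∈ sector a b :=
  ⟨_, by simpa using hθ, rfl⟩

theorem disjoint_sector (a b : ℝ) : Disjoint (sector a b) (sector b (a + 2 * Real.pi)) := by
  rw [Set.disjoint_left]
  rintro _ ⟨w, hw, rfl⟩ ⟨v, hv, hvw⟩
  have heq : v = w := eq_of_exp_eq_exp_of_abs_im_sub_im_lt hvw <| abs_lt.2
    ⟨by linarith [hw.2, hv.1, Real.pi_pos], by linarith [hw.1, hv.2]⟩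
  exact lt_asymm hw.2 (heq ▸ hv.1)

theorem mem_sector_union_sector {a b : ℝ} {z : ℂ} (hz : z ≠ 0) (ha : ∀ w, exp w = z → w.im ≠ a)
    (hb : ∀ w, exp w = z → w.im ≠ b) : z ∈ sector a b ∪ sector b (a + 2 * Real.pi) := by
  obtain ⟨m, hm, -⟩ := existsUnique_add_zsmul_mem_Ico Real.two_pi_pos (log z).im a
  set w : ℂ := log z + m * (2 * Real.pi * I) with hw
  have hwz : exp w = z := by
    rw [hw, Complex.exp_add, Complex.exp_log hz, Complex.exp_int_mul_two_pi_mul_I, mul_one]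
  have him : w.im = (log z).im + m • (2 * Real.pi) := by simp [hw]
  rw [← him] at hm
  rcases (hb w hwz).lt_or_gt with h | h
  · exact .inl ⟨w, ⟨hm.1.lt_of_ne (ha w hwz).symm, h⟩, hwz⟩
  · exact .inr ⟨w, ⟨h, hm.2⟩, hwz⟩

/-- `φ` is a biholomorphic map of `U` onto the open unit disc, with inverse `ψ`. -/
structure IsRiemannMap (φ ψ : ℂ → ℂ) (U : Set ℂ) : Prop where
  differentiableOn : DifferentiableOn ℂ φ U
  differentiableOn_symm : DifferentiableOn ℂ ψ (ball 0 1)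
  mapsTo : MapsTo φ U (ball 0 1)
  mapsTo_symm : MapsTo ψ (ball 0 1) U
  invOn : InvOn ψ φ U (ball 0 1)

theorem IsConformalOn.exists_isRiemannMap {φ : ℂ → ℂ} {U : Set ℂ} (hφ : IsConformalOn φ U)
    (hU : IsOpen U) (him : φ '' U = ball 0 1) : ∃ ψ, IsRiemannMap φ ψ U := by
  have hbij : BijOn φ U (ball 0 1) := him ▸ hφ.injOn.bijOn_image
  have hinv := hbij.invOn_invFunOn
  have hmaps : MapsTo (Function.invFunOn φ U) (ball 0 1) U := hbij.surjOn.mapsTo_invFunOn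
  refine ⟨Function.invFunOn φ U, hφ.differentiableOn, fun w hw ↦ ?_, hbij.mapsTo, hmaps, hinv⟩
  set z := Function.invFunOn φ U w with hz
  have hzU : z ∈ U := hmaps hw
  have hzw : φ z = w := hinv.2 hw
  have hstrict : HasStrictDerivAt φ (deriv φ z) z :=
    (hφ.differentiableOn.analyticAt (hU.mem_nhds hzU)).hasStrictDerivAt
  have hcont : ContinuousAt (Function.invFunOn φ U) w := by
    rw [ContinuousAt, ← hz, ← hzw, ← hstrict.map_nhds_eq (hφ.deriv_ne_zero z hzU), tendsto_map'_iff]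
    refine tendsto_id.congr' ?_
    filter_upwards [hU.mem_nhds hzU] with v hv using (hinv.1 hv).symm
  refine (HasDerivAt.of_local_left_inverse hcont hstrict.hasDerivAt
    (hφ.deriv_ne_zero z hzU) ?_).differentiableAt.differentiableWithinAt
  filter_upwards [isOpen_ball.mem_nhds hw] with v hv using hinv.2 hv

namespace IsRiemannMap

variable {φ ψ : ℂ → ℂ} {U : Set ℂ}

theorem congr {Φ : ℂ → ℂ} (h : IsRiemannMap φ ψ U) (heq : EqOn Φ φ U) : IsRiemannMap Φ ψ U where
  differentiableOn := h.differentiableOn.congr heq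
  differentiableOn_symm := h.differentiableOn_symm
  mapsTo := h.mapsTo.congr heq.symm
  mapsTo_symm := h.mapsTo_symm
  invOn := ⟨fun z hz ↦ by rw [heq hz, h.invOn.1 hz],
    fun w hw ↦ by rw [heq (h.mapsTo_symm hw), h.invOn.2 hw]⟩

theorem bijOn (h : IsRiemannMap φ ψ U) : BijOn φ U (ball 0 1) :=
  h.invOn.bijOn h.mapsTo h.mapsTo_symm

theorem eventually_lt_norm (h : IsRiemannMap φ ψ U) {x : ℂ} (hx : x ∉ U) {r : ℝ} (hr : r < 1) :
    ∀ᶠ z in 𝓝[U] x, r < ‖φ z‖ := by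
  have hsub : closedBall (0 : ℂ) r ⊆ ball 0 1 := closedBall_subset_ball hr
  have hcompact : IsCompact (ψ '' closedBall 0 r) :=
    (isCompact_closedBall 0 r).image_of_continuousOn
      (h.differentiableOn_symm.continuousOn.mono hsub)
  have hxK : x ∉ ψ '' closedBall 0 r := by
    rintro ⟨w, hw, rfl⟩
    exact hx (h.mapsTo_symm (hsub hw))
  filter_upwards [self_mem_nhdsWithin,
    mem_nhdsWithin_of_mem_nhds (hcompact.isClosed.isOpen_compl.mem_nhds hxK)] with z hzU hzK
  by_contra! hle
  exact hzK ⟨φ z, by simpa using hle, h.invOn.1 hzU⟩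

theorem tendsto_norm (h : IsRiemannMap φ ψ U) {x : ℂ} (hx : x ∉ U) :
    Tendsto (fun z ↦ ‖φ z‖) (𝓝[U] x) (𝓝 1) := by
  refine tendsto_order.2 ⟨fun r hr ↦ h.eventually_lt_norm hx hr, fun r hr ↦ ?_⟩
  filter_upwards [self_mem_nhdsWithin] with z hz
  exact (mem_ball_zero_iff.1 (h.mapsTo hz)).trans hr

theorem mem_sphere_of_mapClusterPt (h : IsRiemannMap φ ψ U) {x ζ : ℂ} (hx : x ∉ U)
    (hζ : MapClusterPt ζ (𝓝[U] x) φ) : ζ ∈ sphere (0 : ℂ) 1 := by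
  have hnorm : MapClusterPt ‖ζ‖ (𝓝[U] x) (fun z ↦ ‖φ z‖) :=
    hζ.continuousAt_comp continuous_norm.continuousAt
  have : (𝓝 ‖ζ‖ ⊓ 𝓝 1).NeBot := hnorm.neBot.mono (inf_le_inf_left _ (h.tendsto_norm hx))
  exact mem_sphere_zero_iff_norm.2 (eq_of_nhds_neBot this)

theorem eventually_im_ne (h : IsRiemannMap φ ψ U) {x : ℂ} {θ : ℝ} (hx : x ∉ U)
    (hθ : ¬ MapClusterPt x (𝓝[<] 0) fun u : ℝ ↦ ψ (exp (u + θ * I))) :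
    ∀ᶠ z in 𝓝[U] x, ∀ w, exp w = φ z → w.im ≠ θ := by
  rw [mapClusterPt_iff_frequently] at hθ
  push Not at hθ
  obtain ⟨N, hN, hNθ⟩ := hθ
  obtain ⟨c, hc, hcN⟩ := mem_nhdsLT_iff_exists_Ioo_subset.1 hNθ
  filter_upwards [self_mem_nhdsWithin, mem_nhdsWithin_of_mem_nhds hN,
    h.eventually_lt_norm hx (Real.exp_lt_one_iff.2 (mem_Iio.1 hc))] with z hzU hzN hz w hw him
  have hz_lt : ‖φ z‖ < 1 := mem_ball_zero_iff.1 (h.mapsTo hzU)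
  rw [← hw, Complex.norm_exp] at hz hz_lt
  refine hcN ⟨Real.exp_lt_exp.1 hz, Real.exp_lt_one_iff.1 hz_lt⟩ ?_
  simpa only [← him, re_add_im, hw, h.invOn.1 hzU] using hzN

theorem not_forall_mapClusterPt_radii (h : IsRiemannMap φ ψ U) (hb : Bornology.IsBounded U)
    {x : ℂ} (hx : x ∉ U) {a b : ℝ} (hab : a < b) :
    ∃ θ ∈ Ioo a b, ¬ MapClusterPt x (𝓝[<] 0) fun u : ℝ ↦ ψ (exp (u + θ * I)) := by
  by_contra! hall
  have heq := apply_zero_eq_of_mapClusterPt_radii hab h.differentiableOn_symm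
    h.invOn.2.injOn (hb.subset h.mapsTo_symm.image_subset) hall
  exact hx (heq ▸ h.mapsTo_symm (mem_ball_self one_pos))

/- Otherwise the image of a connected piece of `U` near `x` would avoid both rays, although it
comes close to cluster values on either side of them. -/
theorem mapClusterPt_radius_or {γ : ℝ → ℂ} (h : IsRiemannMap φ ψ U) (hD : IsJordanDomain γ U)
    {x : ℂ} (hx : x ∈ range γ) {α β a b : ℝ} (hα : α ∈ Ioo a b) (hβ : β ∈ Ioo b (a + 2 * Real.pi))
    (hφα : MapClusterPt (exp (α * I)) (𝓝[U] x) φ) (hφβ : MapClusterPt (exp (β * I)) (𝓝[U] x) φ) :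
    MapClusterPt x (𝓝[<] 0) (fun u : ℝ ↦ ψ (exp (u + a * I))) ∨
      MapClusterPt x (𝓝[<] 0) (fun u : ℝ ↦ ψ (exp (u + b * I))) := by
  have hxU : x ∉ U := fun hU ↦ Set.disjoint_left.1 hD.disjoint_range hU hx
  by_contra! hcon
  have hsector : ∀ᶠ z in 𝓝[U] x, φ z ∈ sector a b ∪ sector b (a + 2 * Real.pi) := by
    filter_upwards [h.eventually_im_ne hxU hcon.1, h.eventually_im_ne hxU hcon.2,
      h.eventually_lt_norm hxU one_pos] with z hza hzb hz
    exact mem_sector_union_sector (norm_pos_iff.1 hz) hza hzb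
  obtain ⟨ε, hε, hsub⟩ := mem_nhdsWithin_iff.1 hsector
  obtain ⟨δ, hδ, -, hconn⟩ := hD.exists_mem_connectedComponentIn_inter_ball hx hε
  have hnear {θ s t : ℝ} (hθ : θ ∈ Ioo s t) (hφθ : MapClusterPt (exp (θ * I)) (𝓝[U] x) φ) :
      ∃ z ∈ U ∩ ball x δ, φ z ∈ sector s t := by
    have hfreq := hφθ.frequently
      ((isOpen_sector s t).mem_nhds (exp_ofReal_mul_I_mem_sector hθ))
    obtain ⟨z, hz, hzδ⟩ := (hfreq.and_eventually
      (inter_mem_nhdsWithin U (ball_mem_nhds x hδ))).exists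
    exact ⟨z, hzδ, hz⟩
  obtain ⟨z, hz, hzα⟩ := hnear hα hφα
  obtain ⟨v, hv, hvβ⟩ := hnear hβ hφβ
  set C := connectedComponentIn (U ∩ ball x ε) z
  have hCsub : C ⊆ U ∩ ball x ε := connectedComponentIn_subset _ _
  have hC : IsPreconnected (φ '' C) := isPreconnected_connectedComponentIn.image _
    (h.differentiableOn.continuousOn.mono (hCsub.trans inter_subset_left))
  have hleft : φ '' C ⊆ sector a b := hC.subset_left_of_subset_union (isOpen_sector _ _)
    (isOpen_sector _ _) (disjoint_sector a b)
    (image_subset_iff.2 fun w hw ↦ hsub ⟨(hCsub hw).2, (hCsub hw).1⟩)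
    ⟨φ z, mem_image_of_mem φ (hconn z hz z hz), hzα⟩
  exact Set.disjoint_left.1 (disjoint_sector a b)
    (hleft (mem_image_of_mem φ (hconn z hz v hv))) hvβ

theorem eq_of_mapClusterPt {γ : ℝ → ℂ} (h : IsRiemannMap φ ψ U) (hD : IsJordanDomain γ U)
    {x ζ ω : ℂ} (hx : x ∈ range γ) (hζ : MapClusterPt ζ (𝓝[U] x) φ)
    (hω : MapClusterPt ω (𝓝[U] x) φ) : ζ = ω := by
  by_contra hne
  have hxU : x ∉ U := fun hU ↦ Set.disjoint_left.1 hD.disjoint_range hU hx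
  have hcircle := isJordanParam_circleMap 0 one_ne_zero
  have hrange : range (circleMap 0 1) = sphere 0 1 := by rw [range_circleMap, abs_one]
  obtain ⟨α, -, hα⟩ := hcircle.exists_mem_Ico (hrange ▸ h.mem_sphere_of_mapClusterPt hxU hζ) 0
  obtain ⟨β, hβ, hβω⟩ := hcircle.exists_mem_Ico (hrange ▸ h.mem_sphere_of_mapClusterPt hxU hω) α
  have hαβ : α < β := hβ.1.lt_of_ne (by rintro rfl; exact hne (hα.symm.trans hβω))
  simp only [circleMap_zero, ofReal_one, one_mul] at hα hβω
  subst hα hβω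
  obtain ⟨a, ha, haθ⟩ := h.not_forall_mapClusterPt_radii hD.isBounded hxU
    (show β - 2 * Real.pi < α by linarith [hβ.2])
  obtain ⟨b, hb, hbθ⟩ := h.not_forall_mapClusterPt_radii hD.isBounded hxU hαβ
  exact (h.mapClusterPt_radius_or hD hx ⟨ha.2, hb.1⟩ ⟨hb.2, by linarith [ha.1]⟩ hζ hω).elim haθ hbθ

theorem exists_tendsto {γ : ℝ → ℂ} (h : IsRiemannMap φ ψ U) (hD : IsJordanDomain γ U)
    {x : ℂ} (hx : x ∈ range γ) : ∃ ζ, Tendsto φ (𝓝[U] x) (𝓝 ζ) := by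
  have : (𝓝[U] x).NeBot := mem_closure_iff_nhdsWithin_neBot.1 (hD.range_subset_closure hx)
  have hmem : closedBall (0 : ℂ) 1 ∈ map φ (𝓝[U] x) := by
    rw [mem_map]
    filter_upwards [self_mem_nhdsWithin] with z hz
    exact ball_subset_closedBall (h.mapsTo hz)
  obtain ⟨ζ, -, hζ⟩ := (isCompact_closedBall (0 : ℂ) 1).exists_clusterPt (le_principal_iff.2 hmem)
  exact ⟨ζ, (isCompact_closedBall (0 : ℂ) 1).le_nhds_of_unique_clusterPt hmem
    fun ω _ hω ↦ h.eq_of_mapClusterPt hD hx hω hζ⟩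

end IsRiemannMap

end BoundaryLimits

section CaratheodoryExtension

theorem isPreconnected_inter_preimage_singleton {X Y : Type*} [TopologicalSpace X] [T2Space X]
    [MetricSpace Y] {f : X → Y} {D K : Set X} {y : Y} (hK : IsCompact K) (hDK : D ⊆ K)
    (hKD : K ⊆ closure D) (hf : ContinuousOn f K)
    (hD : ∀ r > 0, IsPreconnected (D ∩ f ⁻¹' ball y r)) : IsPreconnected (K ∩ f ⁻¹' {y}) := by
  have hF : IsCompact (K ∩ f ⁻¹' {y}) :=
    hK.of_isClosed_subset (hf.preimage_isClosed_of_isClosed hK.isClosed isClosed_singleton)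
      inter_subset_left
  refine isPreconnected_closed_iff.2 fun s t hs ht hst hFs hFt ↦ ?_
  by_contra hempty
  have hdisj : Disjoint (K ∩ f ⁻¹' {y} ∩ s) (K ∩ f ⁻¹' {y} ∩ t) :=
    Set.disjoint_left.2 fun x hx hx' ↦ hempty ⟨x, hx.1, hx.2, hx'.2⟩
  obtain ⟨A, B, hA, hB, hsA, htB, hAB⟩ :=
    SeparatedNhds.of_isCompact_isCompact (hF.inter_right hs) (hF.inter_right ht) hdisj
  have hy : y ∉ f '' (K \ (A ∪ B)) := by
    rintro ⟨x, hx, hxy⟩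
    exact hx.2 ((hst ⟨hx.1, hxy⟩).imp (fun h ↦ hsA ⟨⟨hx.1, hxy⟩, h⟩) fun h ↦ htB ⟨⟨hx.1, hxy⟩, h⟩)
  have hclosed : IsClosed (f '' (K \ (A ∪ B))) :=
    ((hK.diff (hA.union hB)).image_of_continuousOn (hf.mono sdiff_subset)).isClosed
  obtain ⟨r, hr, hball⟩ := Metric.isOpen_iff.1 hclosed.isOpen_compl y hy
  have hcover : D ∩ f ⁻¹' ball y r ⊆ A ∪ B := fun z hz ↦ by
    by_contra hzAB
    exact hball hz.2 ⟨z, ⟨hDK hz.1, hzAB⟩, rfl⟩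
  have hmeet {x : X} {O : Set X} (hx : x ∈ K ∩ f ⁻¹' {y}) (hO : IsOpen O) (hxO : x ∈ O) :
      (D ∩ f ⁻¹' ball y r ∩ O).Nonempty := by
    have : (𝓝[D] x).NeBot := mem_closure_iff_nhdsWithin_neBot.1 (hKD hx.1)
    have hlim : Tendsto f (𝓝[D] x) (𝓝 y) := hx.2 ▸ (hf x hx.1).mono hDK
    obtain ⟨z, ⟨hzr, hzO⟩, hzD⟩ := (((hlim.eventually (ball_mem_nhds y hr)).and
      (mem_nhdsWithin_of_mem_nhds (hO.mem_nhds hxO))).and self_mem_nhdsWithin).exists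
    exact ⟨z, ⟨hzD, hzr⟩, hzO⟩
  obtain ⟨x, hx⟩ := hFs
  obtain ⟨x', hx'⟩ := hFt
  obtain ⟨z, hz, hzB⟩ := hmeet hx'.1 hB (htB hx')
  exact Set.disjoint_left.1 hAB
    ((hD r hr).subset_left_of_subset_union hA hB hAB hcover (hmeet hx.1 hA (hsA hx)) hz) hzB

theorem exists_finset_rotation_mem {V : Set ℂ} {c q : ℂ} (hV : IsOpen V) (hq : q ∈ V)
    (hqc : q ≠ c) :
    ∃ F : Finset ℂ, (∀ u ∈ F, ‖u‖ = 1) ∧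
      ∀ z ∈ sphere c (dist q c), ∃ u ∈ F, c + u * (z - c) ∈ V := by
  classical
  have hne {x : ℂ} (hx : x ∈ sphere c (dist q c)) : x - c ≠ 0 :=
    sub_ne_zero.2 (ne_of_mem_sphere hx (dist_pos.2 hqc).ne')
  obtain ⟨t, ht, hcover⟩ := (isCompact_sphere c (dist q c)).elim_nhds_subcover
    (fun x ↦ (fun z ↦ c + (q - c) / (x - c) * (z - c)) ⁻¹' V) fun x hx ↦
      (hV.preimage (by fun_prop)).mem_nhds (by simpa [div_mul_cancel₀ _ (hne hx)] using hq)
  refine ⟨t.image fun x ↦ (q - c) / (x - c), fun u hu ↦ ?_, fun z hz ↦ ?_⟩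
  · obtain ⟨x, hx, rfl⟩ := Finset.mem_image.1 hu
    rw [norm_div, ← dist_eq_norm, ← dist_eq_norm, mem_sphere.1 (ht x hx),
      div_self (dist_pos.2 hqc).ne']
  · obtain ⟨x, hx, hzx⟩ := mem_iUnion₂.1 (hcover hz)
    exact ⟨_, Finset.mem_image_of_mem _ hx, hzx⟩

theorem diffContOnCl_finsetProd {ι : Type*} {F : Finset ι} {f : ι → ℂ → ℂ} {Ω : Set ℂ}
    (h : ∀ i ∈ F, DiffContOnCl ℂ (f i) Ω) : DiffContOnCl ℂ (fun z ↦ ∏ i ∈ F, f i z) Ω :=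
  ⟨.fun_finsetProd fun i hi ↦ (h i hi).differentiableOn,
    continuousOn_finsetProd _ fun i hi ↦ (h i hi).continuousOn⟩

/- Multiply the rotates of `h` about `c`: the product vanishes on the boundary of the intersection
of the rotates of `U`, which stays away from the circle through `q`, so the maximum principle makes
it vanish at `c`. -/
theorem eq_zero_of_eq_zero_on_frontier_inter_closedBall {U : Set ℂ} {h : ℂ → ℂ} {c q : ℂ}
    (hU : IsOpen U) (hh : DiffContOnCl ℂ h U) (hc : c ∈ U) (hq : q ∉ closure U)
    (h0 : ∀ z ∈ frontier U ∩ closedBall c (dist q c), h z = 0) : h c = 0 := by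
  have hqc : q ≠ c := fun e ↦ hq (e ▸ subset_closure hc)
  obtain ⟨F, hF, hcover⟩ := exists_finset_rotation_mem isClosed_closure.isOpen_compl hq hqc
  set R := dist q c
  set A : ℂ → ℂ → ℂ := fun u z ↦ c + u * (z - c) with hA
  have hAd (u : ℂ) : Differentiable ℂ (A u) := by fun_prop
  set Ω : Set ℂ := ball c R ∩ ⋂ u ∈ F, A u ⁻¹' U
  have hΩ : IsOpen Ω :=
    isOpen_ball.inter (isOpen_biInter_finset fun u _ ↦ hU.preimage (hAd u).continuous)
  have hcΩ : c ∈ Ω := ⟨mem_ball_self (dist_pos.2 hqc), mem_iInter₂.2 fun u _ ↦ by simpa [hA]⟩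
  have hmaps (u : ℂ) (hu : u ∈ F) : MapsTo (A u) Ω U := fun z hz ↦ mem_iInter₂.1 hz.2 u hu
  have hG : DiffContOnCl ℂ (fun z ↦ ∏ u ∈ F, h (A u z)) Ω :=
    diffContOnCl_finsetProd fun u hu ↦ hh.comp (hAd u).diffContOnCl (hmaps u hu)
  have hbd : ∀ z ∈ frontier Ω, ‖∏ u ∈ F, h (A u z)‖ ≤ 0 := fun z hz ↦ by
    rw [hΩ.frontier_eq] at hz
    have hcl (u : ℂ) (hu : u ∈ F) : A u z ∈ closure U :=
      map_mem_closure (hAd u).continuous hz.1 (hmaps u hu)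
    have hzR : dist z c ≤ R := closure_ball_subset_closedBall (closure_mono inter_subset_left hz.1)
    have hzball : z ∈ ball c R := hzR.lt_of_ne fun hzs ↦ by
      obtain ⟨u, hu, huV⟩ := hcover z hzs
      exact huV (hcl u hu)
    obtain ⟨u, hu, huU⟩ : ∃ u ∈ F, A u z ∉ U := by
      by_contra! hall
      exact hz.2 ⟨hzball, mem_iInter₂.2 hall⟩
    have hmem : A u z ∈ closedBall c R := by
      rwa [mem_closedBall, dist_eq_norm, add_sub_cancel_left, norm_mul, hF u hu, one_mul,
        ← dist_eq_norm]
    have hzero : h (A u z) = 0 := h0 _ ⟨by rw [hU.frontier_eq]; exact ⟨hcl u hu, huU⟩, hmem⟩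
    rw [Finset.prod_eq_zero hu hzero, norm_zero]
  have hGc := norm_le_zero_iff.1 <| Complex.norm_le_of_forall_mem_frontier_norm_le
    (isBounded_ball.subset inter_subset_left) hG hbd (subset_closure hcΩ)
  obtain ⟨u, -, hu⟩ := Finset.prod_eq_zero_iff.1 hGc
  simpa [hA] using hu

theorem exists_mem_frontier_inter_ball_ne {U : Set ℂ} {f : ℂ → ℂ} {x ζ : ℂ} (hU : IsOpen U)
    (hf : DiffContOnCl ℂ f U) (hζ : ∀ z ∈ U, f z ≠ ζ) (hx : x ∈ closure U)
    (hx' : x ∈ closure (closure U)ᶜ) {ε : ℝ} (hε : 0 < ε) :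
    ∃ y ∈ frontier U ∩ ball x ε, f y ≠ ζ := by
  obtain ⟨c, hcU, hxc⟩ := Metric.mem_closure_iff.1 hx (ε / 3) (by positivity)
  obtain ⟨q, hqU, hxq⟩ := Metric.mem_closure_iff.1 hx' (ε / 3) (by positivity)
  by_contra! hconst
  refine hζ c hcU (sub_eq_zero.1 (eq_zero_of_eq_zero_on_frontier_inter_closedBall
    (h := fun z ↦ f z - ζ) hU (hf.sub_const ζ) hcU hqU fun z hz ↦
      sub_eq_zero.2 (hconst z ⟨hz.1, ?_⟩)))
  have hzc : dist z c ≤ dist q c := hz.2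
  rw [mem_ball]
  linarith [dist_triangle z c x, dist_triangle q x c, dist_comm c x, dist_comm q x]

namespace IsRiemannMap

variable {φ ψ : ℂ → ℂ} {U : Set ℂ} {γ : ℝ → ℂ}

theorem isPreconnected_closure_inter_preimage (h : IsRiemannMap φ ψ U)
    (hc : ContinuousOn φ (closure U)) (hb : Bornology.IsBounded U) (ζ : ℂ) :
    IsPreconnected (closure U ∩ φ ⁻¹' {ζ}) := by
  refine isPreconnected_inter_preimage_singleton hb.isCompact_closure subset_closure subset_rfl hc
    fun r _ ↦ ?_
  have himage : ψ '' (ball 0 1 ∩ ball ζ r) = U ∩ φ ⁻¹' ball ζ r := by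
    refine Subset.antisymm ?_ fun z hz ↦ ⟨φ z, ⟨h.mapsTo hz.1, hz.2⟩, h.invOn.1 hz.1⟩
    rintro _ ⟨w, hw, rfl⟩
    exact ⟨h.mapsTo_symm hw.1, by simpa [h.invOn.2 hw.1] using hw.2⟩
  rw [← himage]
  exact ((convex_ball _ _).inter (convex_ball _ _)).isPreconnected.image _
    (h.differentiableOn_symm.continuousOn.mono inter_subset_left)

theorem mapsTo_frontier (h : IsRiemannMap φ ψ U) (hc : ContinuousOn φ (closure U))
    (hU : IsOpen U) : MapsTo φ (frontier U) (sphere 0 1) := fun x hx ↦ by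
  rw [hU.frontier_eq] at hx
  have : (𝓝[U] x).NeBot := mem_closure_iff_nhdsWithin_neBot.1 hx.1
  exact h.mem_sphere_of_mapClusterPt hx.2 ((hc x hx.1).mono subset_closure).mapClusterPt

theorem surjOn_frontier (h : IsRiemannMap φ ψ U) (hc : ContinuousOn φ (closure U))
    (hU : IsOpen U) (hb : Bornology.IsBounded U) : SurjOn φ (frontier U) (sphere 0 1) := by
  intro ζ hζ
  have hsub : closure (ball (0 : ℂ) 1) ⊆ φ '' closure U := by
    rw [← h.bijOn.image_eq]
    exact closure_minimal (image_mono subset_closure)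
      (hb.isCompact_closure.image_of_continuousOn hc).isClosed
  rw [closure_ball _ one_ne_zero] at hsub
  obtain ⟨z, hz, rfl⟩ := hsub (sphere_subset_closedBall hζ)
  refine ⟨z, hU.frontier_eq ▸ ⟨hz, fun hzU ↦ ?_⟩, rfl⟩
  exact sphere_disjoint_ball.le_bot ⟨hζ, h.mapsTo hzU⟩

theorem exists_mem_Ioo_apply_ne (h : IsRiemannMap φ ψ U) (hc : ContinuousOn φ (closure U))
    (hD : IsJordanDomain γ U) {ζ : ℂ} (hζ : ζ ∈ sphere (0 : ℂ) 1) {a b : ℝ} (hab : a < b)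
    (hba : b < a + 2 * Real.pi) : ∃ t ∈ Ioo a b, φ (γ t) ≠ ζ := by
  have hγ := hD.isJordanParam
  set m := (a + b) / 2 with hm
  have hmem : γ m ∉ γ '' Icc b (a + 2 * Real.pi) := by
    rintro ⟨s, hs, hsm⟩
    exact hγ.apply_ne (by linarith [hs.1]) (by linarith [hs.2]) hsm.symm
  obtain ⟨ε, hε, hball⟩ := Metric.isOpen_iff.1
    (isCompact_Icc.image hγ.continuous).isClosed.isOpen_compl _ hmem
  obtain ⟨y, ⟨hyU, hyε⟩, hy⟩ := exists_mem_frontier_inter_ball_ne (ε := ε) hD.isOpen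
    ⟨h.differentiableOn, hc⟩ (fun z hz ↦ (sphere_disjoint_ball.ne_of_mem hζ (h.mapsTo hz)).symm)
    (hD.range_subset_closure (mem_range_self m))
    (frontier_subset_closure (hD.frontier_compl_closure ▸ mem_range_self m)) hε
  obtain ⟨t, ht, rfl⟩ := hγ.exists_mem_Ico (hD.frontier_eq ▸ hyU) a
  have htb : t < b := by
    by_contra! hbt
    exact hball hyε ⟨t, ⟨hbt, ht.2.le⟩, rfl⟩
  have hat : a ≠ t := by
    rintro rfl
    exact hball hyε ⟨a + 2 * Real.pi, ⟨hba.le, le_rfl⟩, hγ.periodic a⟩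
  exact ⟨t, ⟨ht.1.lt_of_ne hat, htb⟩, hy⟩

theorem apply_ne_of_lt (h : IsRiemannMap φ ψ U) (hc : ContinuousOn φ (closure U))
    (hD : IsJordanDomain γ U) {a b : ℝ} (hab : a < b) (hba : b < a + 2 * Real.pi) :
    φ (γ a) ≠ φ (γ b) := by
  intro heq
  have hγ := hD.isJordanParam
  have hcl (t : ℝ) : γ t ∈ closure U := hD.range_subset_closure (mem_range_self t)
  have hζ : φ (γ b) ∈ sphere (0 : ℂ) 1 :=
    h.mapsTo_frontier hc hD.isOpen (hD.frontier_eq ▸ mem_range_self b)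
  obtain ⟨t₁, ht₁, hne₁⟩ := h.exists_mem_Ioo_apply_ne hc hD hζ hab hba
  obtain ⟨t₂, ht₂, hne₂⟩ := h.exists_mem_Ioo_apply_ne hc hD hζ hba (by linarith)
  have hclosed (s t : ℝ) : IsClosed (γ '' Icc s t) :=
    (isCompact_Icc.image hγ.continuous).isClosed
  have hcover : closure U ∩ φ ⁻¹' {φ (γ b)} ⊆
      γ '' Icc t₁ t₂ ∪ γ '' Icc t₂ (t₁ + 2 * Real.pi) := by
    rintro z ⟨hz, hzζ⟩
    have hzγ : z ∈ range γ := (hD.closure_eq ▸ hz).resolve_left fun hzU ↦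
      sphere_disjoint_ball.le_bot ⟨hζ, hzζ ▸ h.mapsTo hzU⟩
    obtain ⟨t, ht, rfl⟩ := hγ.exists_mem_Ico hzγ t₁
    exact (le_total t t₂).imp (fun h ↦ ⟨t, ⟨ht.1, h⟩, rfl⟩) fun h ↦ ⟨t, ⟨h, ht.2.le⟩, rfl⟩
  obtain ⟨-, ⟨-, hz⟩, ⟨s, hs, rfl⟩, s', hs', hss'⟩ := isPreconnected_closed_iff.1
    (h.isPreconnected_closure_inter_preimage hc hD.isBounded _) _ _ (hclosed _ _) (hclosed _ _)
    hcover ⟨γ b, ⟨hcl b, rfl⟩, b, ⟨ht₁.2.le, ht₂.1.le⟩, rfl⟩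
    ⟨γ a, ⟨hcl a, heq⟩, a + 2 * Real.pi, ⟨ht₂.2.le, by linarith [ht₁.1]⟩, hγ.periodic a⟩
  have hst₁ : t₁ < s := hs.1.lt_of_ne (by rintro rfl; exact hne₁ hz)
  have hst₂ : s < t₂ := hs.2.lt_of_ne (by rintro rfl; exact hne₂ hz)
  exact hγ.apply_ne (hst₂.trans_le hs'.1) (by linarith [hs'.2]) hss'.symm

theorem bijOn_range (h : IsRiemannMap φ ψ U) (hc : ContinuousOn φ (closure U))
    (hD : IsJordanDomain γ U) : BijOn φ (range γ) (sphere 0 1) := by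
  refine ⟨hD.frontier_eq ▸ h.mapsTo_frontier hc hD.isOpen, fun x hx y hy hxy ↦ ?_,
    hD.frontier_eq ▸ h.surjOn_frontier hc hD.isOpen hD.isBounded⟩
  obtain ⟨a, rfl⟩ := hx
  obtain ⟨b, hb, rfl⟩ := hD.isJordanParam.exists_mem_Ico hy a
  rcases hb.1.eq_or_lt with rfl | hab
  · rfl
  · exact absurd hxy (h.apply_ne_of_lt hc hD hab hb.2)

theorem bijOn_closure (h : IsRiemannMap φ ψ U) (hc : ContinuousOn φ (closure U))
    (hD : IsJordanDomain γ U) : BijOn φ (closure U) (closedBall 0 1) := by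
  have hγ := h.bijOn_range hc hD
  rw [hD.closure_eq, ← ball_union_sphere]
  exact h.bijOn.union hγ <| (injOn_union hD.disjoint_range).2 ⟨h.bijOn.injOn, hγ.injOn,
    fun x hx y hy ↦ (sphere_disjoint_ball.ne_of_mem (hγ.mapsTo hy) (h.mapsTo hx)).symm⟩

end IsRiemannMap

theorem IsJordanDomain.exists_isRiemannMap_continuousOn {γ : ℝ → ℂ} {U : Set ℂ}
    (hD : IsJordanDomain γ U) {p : ℂ} (hp : p ∈ U) :
    ∃ φ ψ, IsRiemannMap φ ψ U ∧ ContinuousOn φ (closure U) ∧ φ p = 0 := by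
  obtain ⟨f, hf, hfp, him⟩ := exists_isConformalOn_image_eq_ball hD.isOpen
    hD.isConnected.isPreconnected hD.isBounded hp fun _ hψ h0 ↦
      hasLogOn_of_isOpen_of_isPreconnected_compl hD.isOpen hD.isConnected hD.isBounded
        hD.isPreconnected_compl hψ h0
  obtain ⟨ψ, h⟩ := hf.exists_isRiemannMap hD.isOpen him
  have hlim : ∀ x ∈ U, Tendsto f (𝓝[U] x) (𝓝 (f x)) := fun x hx ↦
    hf.differentiableOn.continuousOn x hx
  have heq : EqOn (extendFrom U f) f U := fun x hx ↦
    extendFrom_eq (subset_closure hx) (hlim x hx)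
  refine ⟨extendFrom U f, ψ, h.congr heq, continuousOn_extendFrom subset_rfl fun x hx ↦ ?_,
    (heq hp).trans hfp⟩
  rw [hD.closure_eq] at hx
  exact hx.elim (fun hxU ↦ ⟨_, hlim x hxU⟩) fun hxγ ↦ h.exists_tendsto hD hxγ

end CaratheodoryExtension

section Inversion

theorem IsJordanParam.comp {γ : ℝ → ℂ} {f : ℂ → ℂ} (hγ : IsJordanParam γ)
    (hf : ContinuousOn f (range γ)) (hinj : InjOn f (range γ)) : IsJordanParam (f ∘ γ) where
  continuous := hf.comp_continuous hγ.continuous mem_range_self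
  periodic := hγ.periodic.comp f
  exists_int_of_eq _ _ h := hγ.exists_int_of_eq (hinj (mem_range_self _) (mem_range_self _) h)

theorem IsJordanDomain.image_homeomorph {γ : ℝ → ℂ} {U : Set ℂ} (hD : IsJordanDomain γ U)
    (e : ℂ ≃ₜ ℂ) : IsJordanDomain (e ∘ γ) (e '' U) where
  isJordanParam := hD.isJordanParam.comp e.continuous.continuousOn e.injective.injOn
  isOpen := e.isOpen_image.2 hD.isOpen
  isConnected := hD.isConnected.image e e.continuous.continuousOn
  isBounded := (hD.isBounded.isCompact_closure.image e.continuous).isBounded.subset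
    (image_mono subset_closure)
  frontier_eq := by rw [← e.image_frontier, hD.frontier_eq, range_comp]

variable {𝕜 : Type*} [NontriviallyNormedField 𝕜] {s : Set 𝕜}

theorem isOpen_insert_zero_preimage_inv (hs : IsOpen s) (hcob : s ∈ Bornology.cobounded 𝕜) :
    IsOpen (insert 0 (Inv.inv ⁻¹' s)) := by
  refine isOpen_iff_mem_nhds.2 fun w hw ↦ ?_
  rcases eq_or_ne w 0 with rfl | hw0
  · exact insert_mem_nhds_iff.2 (tendsto_inv₀_nhdsNE_zero hcob)
  · exact mem_of_superset ((continuousAt_inv₀ hw0).preimage_mem_nhds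
      (hs.mem_nhds (hw.resolve_left hw0))) (subset_insert _ _)

theorem isPreconnected_insert_zero_preimage_inv (hs : IsPreconnected s) (h0 : (0 : 𝕜) ∉ s)
    (hcob : s ∈ Bornology.cobounded 𝕜) : IsPreconnected (insert 0 (Inv.inv ⁻¹' s)) := by
  have himage : Inv.inv '' s = Inv.inv ⁻¹' s := congrFun inv_involutive.image_eq_preimage_symm s
  have hpre : IsPreconnected (Inv.inv ⁻¹' s) := himage ▸ hs.image _
    (continuousOn_inv₀.mono fun _ hz ↦ ne_of_mem_of_not_mem hz h0)
  exact hpre.subset_closure (subset_insert _ _) <| insert_subset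
    (mem_closure_of_tendsto (tendsto_id.mono_left nhdsWithin_le_nhds)
      (tendsto_inv₀_nhdsNE_zero hcob)) subset_closure

theorem isBounded_insert_zero_preimage_inv (hs : sᶜ ∈ 𝓝 (0 : 𝕜)) :
    Bornology.IsBounded (insert 0 (Inv.inv ⁻¹' s)) :=
  Bornology.isBounded_insert.2 (Bornology.isBounded_def.2 (tendsto_inv₀_cobounded hs))

theorem inv_mem_closure_iff {w : 𝕜} (hw : w ≠ 0) :
    w⁻¹ ∈ closure s ↔ w ∈ closure (insert 0 (Inv.inv ⁻¹' s)) := by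
  rw [insert_eq, closure_union, closure_singleton, mem_union, mem_singleton_iff,
    or_iff_right hw, mem_closure_iff_frequently, mem_closure_iff_frequently, nhds_inv₀ hw]
  exact frequently_map

/-- The image of the exterior of `U` in the Riemann sphere under `z ↦ z⁻¹`. -/
def invertedExterior (U : Set ℂ) : Set ℂ := insert 0 (Inv.inv ⁻¹' (closure U)ᶜ)

variable {γ : ℝ → ℂ} {U : Set ℂ}

theorem IsJordanDomain.zero_notMem_range (hD : IsJordanDomain γ U) (h0 : 0 ∈ U) : 0 ∉ range γ :=
  fun h ↦ Set.disjoint_left.1 hD.disjoint_range h0 h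

theorem IsJordanDomain.frontier_invertedExterior (hD : IsJordanDomain γ U) (h0 : 0 ∈ U)
    (ho : IsOpen (invertedExterior U)) : frontier (invertedExterior U) = range (Inv.inv ∘ γ) := by
  have himage : range (Inv.inv ∘ γ) = Inv.inv ⁻¹' range γ := by
    rw [range_comp]
    exact congrFun inv_involutive.image_eq_preimage_symm _
  ext w
  rw [himage, ho.frontier_eq, mem_preimage, ← hD.frontier_compl_closure,
    isClosed_closure.isOpen_compl.frontier_eq]
  rcases eq_or_ne w 0 with rfl | hw
  · simp [invertedExterior, hD.closure_compl_closure, h0]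
  · refine and_congr (inv_mem_closure_iff hw).symm (not_congr ?_)
    simp [invertedExterior, hw]

theorem IsJordanDomain.isJordanDomain_invertedExterior (hD : IsJordanDomain γ U) (h0 : 0 ∈ U) :
    IsJordanDomain (Inv.inv ∘ γ) (invertedExterior U) := by
  have hcob : (closure U)ᶜ ∈ Bornology.cobounded ℂ := Bornology.isBounded_def.1 hD.isBounded.closure
  have ho : IsOpen (invertedExterior U) :=
    isOpen_insert_zero_preimage_inv isClosed_closure.isOpen_compl hcob
  refine ⟨hD.isJordanParam.comp ?_ inv_injective.injOn, ho, ⟨⟨0, mem_insert _ _⟩, ?_⟩, ?_,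
    hD.frontier_invertedExterior h0 ho⟩
  · exact continuousOn_inv₀.mono fun z hz ↦ ne_of_mem_of_not_mem hz (hD.zero_notMem_range h0)
  · exact isPreconnected_insert_zero_preimage_inv hD.isPreconnected_compl_closure
      (fun h ↦ h (subset_closure h0)) hcob
  · refine isBounded_insert_zero_preimage_inv ?_
    rw [compl_compl]
    exact mem_of_superset (hD.isOpen.mem_nhds h0) subset_closure

theorem IsJordanDomain.bijOn_inv (hD : IsJordanDomain γ U) (h0 : 0 ∈ U) :
    BijOn Inv.inv Uᶜ (closure (invertedExterior U) \ {0}) := by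
  have hmem {w : ℂ} (hw : w ≠ 0) : w⁻¹ ∈ Uᶜ ↔ w ∈ closure (invertedExterior U) :=
    hD.closure_compl_closure ▸ inv_mem_closure_iff hw
  refine ⟨fun z hz ↦ ?_, inv_injective.injOn, fun w hw ↦ ⟨w⁻¹, (hmem hw.2).2 hw.1, inv_inv w⟩⟩
  have hz0 : z⁻¹ ≠ 0 := inv_ne_zero (ne_of_mem_of_not_mem h0 hz).symm
  exact ⟨(hmem hz0).1 (by rwa [inv_inv]), hz0⟩

theorem bijOn_inv_closedBall_sdiff_zero {𝕜 : Type*} [NormedField 𝕜] :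
    BijOn Inv.inv (closedBall (0 : 𝕜) 1 \ {0}) (ball 0 1)ᶜ := by
  refine ⟨fun w hw ↦ ?_, inv_injective.injOn, fun w hw ↦ ⟨w⁻¹, ⟨?_, ?_⟩, inv_inv w⟩⟩
  · rw [mem_compl_iff, mem_ball_zero_iff, norm_inv, not_lt]
    exact (one_le_inv₀ (norm_pos_iff.2 hw.2)).2 (mem_closedBall_zero_iff.1 hw.1)
  · rw [mem_compl_iff, mem_ball_zero_iff, not_lt] at hw
    rw [mem_closedBall_zero_iff, norm_inv]
    exact inv_le_one_of_one_le₀ hw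
  · exact inv_ne_zero fun h ↦ hw (h ▸ mem_ball_self one_pos)

theorem bijOn_inv_sphere {𝕜 : Type*} [NormedField 𝕜] :
    BijOn Inv.inv (sphere (0 : 𝕜) 1) (sphere 0 1) := by
  have hmaps : MapsTo Inv.inv (sphere (0 : 𝕜) 1) (sphere 0 1) := fun w hw ↦ by
    rw [mem_sphere_zero_iff_norm] at hw ⊢
    rw [norm_inv, hw, inv_one]
  exact ⟨hmaps, inv_injective.injOn, fun w hw ↦ ⟨w⁻¹, hmaps hw, inv_inv w⟩⟩

theorem IsJordanDomain.exists_continuousOn_compl (hD : IsJordanDomain γ U) (h0 : 0 ∈ U) :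
    ∃ g : ℂ → ℂ, ContinuousOn g Uᶜ ∧ BijOn g Uᶜ (ball 0 1)ᶜ ∧ BijOn g (range γ) (sphere 0 1) ∧
      Tendsto g (Bornology.cobounded ℂ) (Bornology.cobounded ℂ) := by
  have hD' := hD.isJordanDomain_invertedExterior h0
  have h0' : 0 ∈ invertedExterior U := mem_insert _ _
  obtain ⟨φ, ψ, h, hc, hφ0⟩ := hD'.exists_isRiemannMap_continuousOn h0'
  have hφ := (h.bijOn_closure hc hD').sdiff_singleton (subset_closure h0')
  rw [hφ0] at hφ
  have hinv := hD.bijOn_inv h0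
  have hne : ∀ z ∈ Uᶜ, φ z⁻¹ ≠ 0 := fun z hz ↦ (hφ.mapsTo (hinv.mapsTo hz)).2
  have hcU : ContinuousOn (fun z ↦ φ z⁻¹) Uᶜ :=
    hc.comp (continuousOn_inv₀.mono fun z hz ↦ (ne_of_mem_of_not_mem h0 hz).symm)
      fun z hz ↦ (hinv.mapsTo hz).1
  refine ⟨fun z ↦ (φ z⁻¹)⁻¹, hcU.inv₀ hne, bijOn_inv_closedBall_sdiff_zero.comp (hφ.comp hinv),
    ?_, ?_⟩
  · have himage : range (Inv.inv ∘ γ) = Inv.inv '' range γ := range_comp _ γ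
    exact bijOn_inv_sphere.comp
      ((h.bijOn_range hc hD').comp (himage ▸ inv_injective.injOn.bijOn_image))
  · have hclosure : closure (invertedExterior U) ∈ 𝓝 0 :=
      mem_of_superset (hD'.isOpen.mem_nhds h0') subset_closure
    have hφt : Tendsto φ (𝓝[≠] 0) (𝓝[≠] 0) := by
      refine tendsto_nhdsWithin_iff.2 ⟨?_, ?_⟩
      · have hcont := (hc.continuousAt hclosure).tendsto
        rw [hφ0] at hcont
        exact hcont.mono_left nhdsWithin_le_nhds
      · filter_upwards [mem_nhdsWithin_of_mem_nhds hclosure, self_mem_nhdsWithin] with w hw hw0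
        exact (hφ.mapsTo ⟨hw, hw0⟩).2
    exact tendsto_inv₀_nhdsNE_zero.comp (hφt.comp tendsto_inv₀_cobounded')

end Inversion

section Gluing

theorem exists_homeomorph_of_bijOn {X Y : Type*} [TopologicalSpace X] [TopologicalSpace Y]
    [T2Space Y] [WeaklyLocallyCompactSpace Y] {f g : X → Y} {s : Set X} {t : Set Y}
    (hs : IsCompact (closure s)) (hf : ContinuousOn f (closure s))
    (hg : ContinuousOn g (closure sᶜ)) (hfg : EqOn f g (frontier s)) (hfs : BijOn f s t)
    (hgs : BijOn g sᶜ tᶜ) (hlim : Tendsto g (cocompact X) (cocompact Y)) :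
    ∃ G : X ≃ₜ Y, G '' s = t := by
  classical
  have hcont : Continuous (s.piecewise f g) := continuous_piecewise hfg hf hg
  have hbij : BijOn (s.piecewise f g) s t := hfs.congr (s.piecewise_eqOn f g).symm
  have hbij' : BijOn (s.piecewise f g) sᶜ tᶜ := hgs.congr (s.piecewise_eqOn_compl f g).symm
  have hunion := hbij.union hbij' (injOn_union disjoint_compl_right |>.2 ⟨hbij.injOn, hbij'.injOn,
    fun x hx y hy h ↦ hbij'.mapsTo hy (h ▸ hbij.mapsTo hx)⟩)
  rw [union_compl_self, union_compl_self, bijOn_univ] at hunion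
  have hproper : IsProperMap (s.piecewise f g) := by
    refine isProperMap_iff_tendsto_cocompact.2 ⟨hcont, hlim.congr' ?_⟩
    filter_upwards [hs.compl_mem_cocompact] with x hx
    exact (s.piecewise_eq_of_notMem f g fun h ↦ hx (subset_closure h)).symm
  exact ⟨(Equiv.ofBijective _ hunion).toHomeomorphOfContinuousClosed hcont hproper.isClosedMap,
    hbij.image_eq⟩

section RadialExtension

variable {E : Type*} [NormedAddCommGroup E] [NormedSpace ℝ E] {h k : E → E}

/-- The positively homogeneous extension to the whole space of a self-map of the unit sphere,
fixing the origin. -/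
noncomputable def radialExtension (h : E → E) (z : E) : E := ‖z‖ • h (‖z‖⁻¹ • z)

theorem inv_norm_smul_mem_sphere {z : E} (hz : z ≠ 0) : ‖z‖⁻¹ • z ∈ sphere (0 : E) 1 := by
  rw [mem_sphere_zero_iff_norm, norm_smul, norm_inv, norm_norm,
    inv_mul_cancel₀ (norm_ne_zero_iff.2 hz)]

theorem norm_radialExtension (hh : MapsTo h (sphere 0 1) (sphere 0 1)) (z : E) :
    ‖radialExtension h z‖ = ‖z‖ := by
  rcases eq_or_ne z 0 with rfl | hz
  · simp [radialExtension]
  · rw [radialExtension, norm_smul, norm_norm,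
      mem_sphere_zero_iff_norm.1 (hh (inv_norm_smul_mem_sphere hz)), mul_one]

theorem radialExtension_eqOn_sphere : EqOn (radialExtension h) h (sphere 0 1) := fun z hz ↦ by
  rw [radialExtension, mem_sphere_zero_iff_norm.1 hz, inv_one, one_smul, one_smul]

theorem continuousOn_radialExtension (hh : ContinuousOn h (sphere 0 1)) :
    ContinuousOn (radialExtension h) {0}ᶜ :=
  continuous_norm.continuousOn.smul <| hh.comp
    ((continuous_norm.continuousOn.inv₀ fun _ hz ↦ norm_ne_zero_iff.2 hz).smul continuousOn_id)
    fun _ hz ↦ inv_norm_smul_mem_sphere hz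

theorem leftInverse_radialExtension (hh : MapsTo h (sphere 0 1) (sphere 0 1))
    (hk : LeftInvOn k h (sphere 0 1)) :
    Function.LeftInverse (radialExtension k) (radialExtension h) := fun z ↦ by
  rcases eq_or_ne z 0 with rfl | hz
  · simp [radialExtension]
  · rw [radialExtension, norm_radialExtension hh, radialExtension,
      inv_smul_smul₀ (norm_ne_zero_iff.2 hz), hk (inv_norm_smul_mem_sphere hz),
      smul_inv_smul₀ (norm_ne_zero_iff.2 hz)]

theorem bijOn_radialExtension (hh : BijOn h (sphere 0 1) (sphere 0 1)) :
    BijOn (radialExtension h) (ball 0 1)ᶜ (ball 0 1)ᶜ := by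
  have hinv := hh.invOn_invFunOn
  have hk := hinv.symm.bijOn hh.surjOn.mapsTo_invFunOn hh.mapsTo
  have hmaps {f : E → E} (hf : MapsTo f (sphere 0 1) (sphere 0 1)) :
      MapsTo (radialExtension f) (ball 0 1)ᶜ (ball 0 1)ᶜ := fun z hz ↦ by
    rwa [mem_compl_iff, mem_ball_zero_iff, norm_radialExtension hf, ← mem_ball_zero_iff]
  exact InvOn.bijOn ⟨(leftInverse_radialExtension hh.mapsTo hinv.1).leftInvOn _,
    (leftInverse_radialExtension hk.mapsTo hinv.2).leftInvOn _⟩ (hmaps hh.mapsTo) (hmaps hk.mapsTo)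

end RadialExtension

variable {γ : ℝ → ℂ} {U : Set ℂ}

/- The two boundary correspondences differ by a homeomorphism of the circle, which the radial
extension absorbs outside the disc. -/
theorem IsJordanDomain.exists_homeomorph_of_zero_mem (hD : IsJordanDomain γ U) (h0 : 0 ∈ U) :
    ∃ G : ℂ ≃ₜ ℂ, G '' U = ball 0 1 := by
  obtain ⟨φ, ψ, hφ, hφc, -⟩ := hD.exists_isRiemannMap_continuousOn h0
  obtain ⟨Ψ, hΨc, hΨ, hΨγ, hlim⟩ := hD.exists_continuousOn_compl h0
  have hrange : range γ ⊆ closure U := hD.range_subset_closure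
  have hrange' : range γ ⊆ Uᶜ := fun z hz hzU ↦ Set.disjoint_left.1 hD.disjoint_range hzU hz
  have hinv := hΨγ.invOn_invFunOn
  set h : ℂ → ℂ := φ ∘ Function.invFunOn Ψ (range γ)
  have hh : BijOn h (sphere 0 1) (sphere 0 1) :=
    (hφ.bijOn_range hφc hD).comp (hinv.symm.bijOn hΨγ.surjOn.mapsTo_invFunOn hΨγ.mapsTo)
  have hhΨ : EqOn (h ∘ Ψ) φ (range γ) := fun z hz ↦ congrArg φ (hinv.1 hz)
  have hhc : ContinuousOn h (sphere 0 1) := by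
    rw [← hΨγ.image_eq]
    exact continuousOn_image_of_comp hD.isJordanParam.isCompact_range (hΨc.mono hrange')
      ((hφc.mono hrange).congr hhΨ)
  have hnorm (z : ℂ) : ‖radialExtension h (Ψ z)‖ = ‖Ψ z‖ := norm_radialExtension hh.mapsTo _
  refine exists_homeomorph_of_bijOn (f := φ) (g := radialExtension h ∘ Ψ)
    hD.isBounded.isCompact_closure hφc ?_ ?_ hφ.bijOn ((bijOn_radialExtension hh).comp hΨ) ?_
  · rw [hD.isOpen.isClosed_compl.closure_eq]
    exact (continuousOn_radialExtension hhc).comp hΨc fun z hz hz0 ↦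
      hΨ.mapsTo hz (hz0 ▸ mem_ball_self one_pos)
  · rw [hD.frontier_eq]
    exact fun z hz ↦ (hhΨ hz).symm.trans (radialExtension_eqOn_sphere (hΨγ.mapsTo hz)).symm
  · rw [← Metric.cobounded_eq_cocompact, ← tendsto_norm_atTop_iff_cobounded]
    exact (tendsto_norm_atTop_iff_cobounded.2 hlim).congr fun z ↦ (hnorm z).symm

theorem IsJordanDomain.exists_homeomorph_image_eq_ball (hD : IsJordanDomain γ U) :
    ∃ G : ℂ ≃ₜ ℂ, G '' U = ball 0 1 := by
  obtain ⟨p, hp⟩ := hD.isConnected.nonempty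
  obtain ⟨G, hG⟩ := (hD.image_homeomorph (Homeomorph.subRight p)).exists_homeomorph_of_zero_mem
    ⟨p, hp, sub_self p⟩
  exact ⟨(Homeomorph.subRight p).trans G, by rw [← hG, image_image]; rfl⟩

end Gluing

end JordanSchoenflies

/-- Jordan–Schoenflies: if `U` is the bounded complementary component of a
Jordan curve, there is a homeomorphism of the plane taking `U` onto the open
unit disc and the exterior of `U` onto the exterior of the closed disc. -/
theorem jordan_schoenflies (U : Set ℂ) (hU : IsOpen U)
    (e : Metric.sphere (0 : ℂ) 1 → ℂ) (he : Topology.IsEmbedding e)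
    (hfront : frontier U = Set.range e)
    (hbdd : Bornology.IsBounded U)
    (hcomp : ∃ z₀ ∈ (Set.range e)ᶜ, U = connectedComponentIn (Set.range e)ᶜ z₀) :
    ∃ g : ℂ ≃ₜ ℂ, g '' U = Metric.ball (0 : ℂ) 1 ∧
      g '' (closure U)ᶜ = (Metric.closedBall (0 : ℂ) 1)ᶜ := by
  obtain ⟨z₀, hz₀, rfl⟩ := hcomp
  obtain ⟨γ, hγ, hrange⟩ :=
    JordanSchoenflies.exists_isJordanParam he.continuous he.injective
  have hD : JordanSchoenflies.IsJordanDomain γ (connectedComponentIn (range e)ᶜ z₀) :=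
    ⟨hγ, hU, isConnected_connectedComponentIn_iff.2 hz₀, hbdd, hfront.trans hrange.symm⟩
  obtain ⟨G, hG⟩ := hD.exists_homeomorph_image_eq_ball
  refine ⟨G, hG, ?_⟩
  rw [image_compl_eq G.bijective, G.image_closure, hG, closure_ball _ one_ne_zero]
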